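/- arXiv:2205.03723 — 13 statements merged into one kernel-verified Lean document; each statement's English description precedes it below -/
import Mathlib

section
/- If (s, β, V) is a bimodule of an ε-commutative Hom-associative color Hom-algebra (A, ·, ε, α), then A ⊕ V equipped with the product (x₁+v₁)∗(x₂+v₂) = x₁·x₂ + s(x₁)v₂ + ε(v₁,x₂)s(x₂)v₁ and twisting map α⊕β is again an ε-commutative Hom-associative color Hom-algebra. -/
open scoped TensorProduct

section ColorHomDefs

variable {K Γ A V : Type*} [Field K] [AddCommGroup Γ]
variable [AddCommGroup A] [Module K A] [AddCommGroup V] [Module K V]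

/-- A commutation factor (skew-symmetric bicharacter) on `Γ` with values in `K`. -/
def IsCommFactor (ε : Γ → Γ → K) : Prop :=
  (∀ a b, ε a b ≠ 0) ∧ (∀ a b, ε a b * ε b a = 1) ∧
    (∀ a b c, ε a (b + c) = ε a b * ε a c) ∧
    (∀ a b c, ε (a + b) c = ε a c * ε b c)

/-- The (even bilinear) product respects the grading. -/
def GradedMul (𝒜 : Γ → Submodule K A) (μ : A →ₗ[K] A →ₗ[K] A) : Prop :=
  ∀ ⦃γ₁ γ₂ : Γ⦄ ⦃x y : A⦄, x ∈ 𝒜 γ₁ → y ∈ 𝒜 γ₂ → μ x y ∈ 𝒜 (γ₁ + γ₂)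

/-- An even linear map. -/
def GradedEnd (𝒜 : Γ → Submodule K A) (f : A →ₗ[K] A) : Prop :=
  ∀ ⦃γ : Γ⦄ ⦃x : A⦄, x ∈ 𝒜 γ → f x ∈ 𝒜 γ

/-- ε-commutativity on homogeneous elements. -/
def IsEpsComm (𝒜 : Γ → Submodule K A) (ε : Γ → Γ → K) (μ : A →ₗ[K] A →ₗ[K] A) : Prop :=
  ∀ ⦃γ₁ γ₂ : Γ⦄ ⦃x y : A⦄, x ∈ 𝒜 γ₁ → y ∈ 𝒜 γ₂ → μ x y = ε γ₁ γ₂ • μ y x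

/-- Hom-associativity on homogeneous elements. -/
def IsHomAssoc (𝒜 : Γ → Submodule K A) (μ : A →ₗ[K] A →ₗ[K] A) (α : A →ₗ[K] A) : Prop :=
  ∀ ⦃γ₁ γ₂ γ₃ : Γ⦄ ⦃x y z : A⦄, x ∈ 𝒜 γ₁ → y ∈ 𝒜 γ₂ → z ∈ 𝒜 γ₃ →
    μ (μ x y) (α z) = μ (α x) (μ y z)

/-- The two defining identities of a Hom-Novikov color Hom-algebra. -/
def IsHomNovikov (𝒜 : Γ → Submodule K A) (ε : Γ → Γ → K) (μ : A →ₗ[K] A →ₗ[K] A)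
    (α : A →ₗ[K] A) : Prop :=
  (∀ ⦃γ₁ γ₂ γ₃ : Γ⦄ ⦃x y z : A⦄, x ∈ 𝒜 γ₁ → y ∈ 𝒜 γ₂ → z ∈ 𝒜 γ₃ →
      μ (μ x y) (α z) - μ (α x) (μ y z)
        = ε γ₁ γ₂ • (μ (μ y x) (α z) - μ (α y) (μ x z))) ∧
  (∀ ⦃γ₁ γ₂ γ₃ : Γ⦄ ⦃x y z : A⦄, x ∈ 𝒜 γ₁ → y ∈ 𝒜 γ₂ → z ∈ 𝒜 γ₃ →
      μ (μ x y) (α z) = ε γ₂ γ₃ • μ (μ x z) (α y))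

/-- ε-skew-symmetry and the ε-Hom-Jacobi identity for a bilinear bracket. -/
def IsHomLie (𝒜 : Γ → Submodule K A) (ε : Γ → Γ → K) (br : A →ₗ[K] A →ₗ[K] A)
    (α : A →ₗ[K] A) : Prop :=
  (∀ ⦃γ₁ γ₂ : Γ⦄ ⦃x y : A⦄, x ∈ 𝒜 γ₁ → y ∈ 𝒜 γ₂ → br x y = -(ε γ₁ γ₂ • br y x)) ∧
  (∀ ⦃γ₁ γ₂ γ₃ : Γ⦄ ⦃x y z : A⦄, x ∈ 𝒜 γ₁ → y ∈ 𝒜 γ₂ → z ∈ 𝒜 γ₃ →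
      ε γ₃ γ₁ • br (α x) (br y z) + ε γ₁ γ₂ • br (α y) (br z x)
        + ε γ₂ γ₃ • br (α z) (br x y) = 0)

/-- Compatibility conditions of a Hom-Novikov-Poisson color Hom-algebra. -/
def HNPCompat (𝒜 : Γ → Submodule K A) (ε : Γ → Γ → K) (μ d : A →ₗ[K] A →ₗ[K] A)
    (α : A →ₗ[K] A) : Prop :=
  (∀ ⦃γ₁ γ₂ γ₃ : Γ⦄ ⦃x y z : A⦄, x ∈ 𝒜 γ₁ → y ∈ 𝒜 γ₂ → z ∈ 𝒜 γ₃ →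
      d (μ x y) (α z) = ε γ₂ γ₃ • μ (d x z) (α y)) ∧
  (∀ ⦃γ₁ γ₂ γ₃ : Γ⦄ ⦃x y z : A⦄, x ∈ 𝒜 γ₁ → y ∈ 𝒜 γ₂ → z ∈ 𝒜 γ₃ →
      μ (d x y) (α z) - d (α x) (μ y z)
        = ε γ₁ γ₂ • (μ (d y x) (α z) - d (α y) (μ x z)))

/-- Hom-Novikov-Poisson color Hom-algebra: `μ` is the ε-commutative Hom-associative
product, `d` the Hom-Novikov product. -/
def IsHNP (𝒜 : Γ → Submodule K A) (ε : Γ → Γ → K) (μ d : A →ₗ[K] A →ₗ[K] A)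
    (α : A →ₗ[K] A) : Prop :=
  GradedMul 𝒜 μ ∧ GradedMul 𝒜 d ∧ GradedEnd 𝒜 α ∧
    IsEpsComm 𝒜 ε μ ∧ IsHomAssoc 𝒜 μ α ∧ IsHomNovikov 𝒜 ε d α ∧ HNPCompat 𝒜 ε μ d α

/-- Admissibility: the left Hom-associator mixing the two products vanishes. -/
def IsAdmissibleHNP (𝒜 : Γ → Submodule K A) (ε : Γ → Γ → K) (μ d : A →ₗ[K] A →ₗ[K] A)
    (α : A →ₗ[K] A) : Prop :=
  IsHNP 𝒜 ε μ d α ∧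
    ∀ ⦃γ₁ γ₂ γ₃ : Γ⦄ ⦃x y z : A⦄, x ∈ 𝒜 γ₁ → y ∈ 𝒜 γ₂ → z ∈ 𝒜 γ₃ →
      d (μ x y) (α z) = d (α x) (μ y z)

/-- Gelfand-Dorfman compatibility for a bilinear bracket. -/
def GDCompat (𝒜 : Γ → Submodule K A) (ε : Γ → Γ → K) (μ br : A →ₗ[K] A →ₗ[K] A)
    (α : A →ₗ[K] A) : Prop :=
  ∀ ⦃γ₁ γ₂ γ₃ : Γ⦄ ⦃x y z : A⦄, x ∈ 𝒜 γ₁ → y ∈ 𝒜 γ₂ → z ∈ 𝒜 γ₃ →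
    μ (α y) (br x z)
      = ε γ₂ γ₁ • br (α x) (μ y z) - ε (γ₁ + γ₂) γ₃ • br (α z) (μ y x)
        + μ (br y x) (α z) - ε γ₁ γ₃ • μ (br y z) (α x)

/-- The transposed Hom-ε-Leibniz identity. -/
def TransposedLeibniz (𝒜 : Γ → Submodule K A) (ε : Γ → Γ → K) (μ br : A →ₗ[K] A →ₗ[K] A)
    (α : A →ₗ[K] A) : Prop :=
  ∀ ⦃γ₁ γ₂ γ₃ : Γ⦄ ⦃x y z : A⦄, x ∈ 𝒜 γ₁ → y ∈ 𝒜 γ₂ → z ∈ 𝒜 γ₃ →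
    (2 : K) • μ (α z) (br x y) = br (μ z x) (α y) + ε γ₃ γ₁ • br (α x) (μ z y)

/-- The ε-commutator bracket of homogeneous elements of degrees `γ`, `δ`. -/
def brkt (ε : Γ → Γ → K) (μ : A →ₗ[K] A →ₗ[K] A) (γ δ : Γ) (x y : A) : A :=
  μ x y - ε γ δ • μ y x

/-- The Yau twist `x ∗ y = α (μ x y)` of a bilinear product. -/
def twistMul (α : A →ₗ[K] A) (μ : A →ₗ[K] A →ₗ[K] A) : A →ₗ[K] A →ₗ[K] A :=
  (LinearMap.llcomp K A A A α).comp μ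

/-- The product `x ⋄ y = μ x (D y)`. -/
def precompMul (D : A →ₗ[K] A) (μ : A →ₗ[K] A →ₗ[K] A) : A →ₗ[K] A →ₗ[K] A :=
  (LinearMap.lcomp K A D).comp μ

/-- Semidirect product of an ε-commutative Hom-associative color Hom-algebra with a
bimodule, on homogeneous elements of degrees `γ₁`, `γ₂`. -/
def sdDot (ε : Γ → Γ → K) (μ : A →ₗ[K] A →ₗ[K] A) (s : A →ₗ[K] V →ₗ[K] V)
    (γ₁ γ₂ : Γ) (X Y : A × V) : A × V :=
  (μ X.1 Y.1, s X.1 Y.2 + ε γ₁ γ₂ • s Y.1 X.2)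

/-- Semidirect product of a Hom-Novikov color Hom-algebra with a bimodule. -/
def sdDiam (μ : A →ₗ[K] A →ₗ[K] A) (l r : A →ₗ[K] V →ₗ[K] V) (X Y : A × V) : A × V :=
  (μ X.1 Y.1, l X.1 Y.2 + r Y.1 X.2)

/-- Semidirect product bracket of a Hom-Lie color Hom-algebra with a representation. -/
def sdBr (ε : Γ → Γ → K) (br : A →ₗ[K] A →ₗ[K] A) (ρ : A →ₗ[K] V →ₗ[K] V)
    (γ₁ γ₂ : Γ) (X Y : A × V) : A × V :=
  (br X.1 Y.1, ρ X.1 Y.2 - ε γ₁ γ₂ • ρ Y.1 X.2)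

/-- The twisting map `α ⊕ β` on `A × V`. -/
def sdEnd (α : A →ₗ[K] A) (β : V →ₗ[K] V) (X : A × V) : A × V := (α X.1, β X.2)

end ColorHomDefs

/-- semidirect product of an ε-commutative Hom-associative color
Hom-algebra with a bimodule `(s, β, V)`. -/
theorem semidirect_epsComm_homAssoc
    {K Γ A V : Type*} [Field K] [AddCommGroup Γ] [AddCommGroup A] [Module K A]
    [AddCommGroup V] [Module K V]
    (𝒜 : Γ → Submodule K A) (𝒱 : Γ → Submodule K V) (ε : Γ → Γ → K)
    (μ : A →ₗ[K] A →ₗ[K] A) (α : A →ₗ[K] A) (β : V →ₗ[K] V) (s : A →ₗ[K] V →ₗ[K] V)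
    (hε : IsCommFactor ε) (hμ : GradedMul 𝒜 μ) (hα : GradedEnd 𝒜 α)
    (hβ : ∀ ⦃γ : Γ⦄ ⦃v : V⦄, v ∈ 𝒱 γ → β v ∈ 𝒱 γ)
    (hs : ∀ ⦃γ₁ γ₂ : Γ⦄ ⦃x : A⦄ ⦃v : V⦄, x ∈ 𝒜 γ₁ → v ∈ 𝒱 γ₂ → s x v ∈ 𝒱 (γ₁ + γ₂))
    (hcomm : IsEpsComm 𝒜 ε μ) (hassoc : IsHomAssoc 𝒜 μ α)
    (hbimod : ∀ ⦃γ₁ γ₂ γ₃ : Γ⦄ ⦃x y : A⦄ ⦃v : V⦄, x ∈ 𝒜 γ₁ → y ∈ 𝒜 γ₂ → v ∈ 𝒱 γ₃ →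
      s (μ x y) (β v) = s (α x) (s y v)) :
    (∀ ⦃γ₁ γ₂ : Γ⦄ ⦃X Y : A × V⦄, X ∈ (𝒜 γ₁).prod (𝒱 γ₁) → Y ∈ (𝒜 γ₂).prod (𝒱 γ₂) →
        sdDot ε μ s γ₁ γ₂ X Y ∈ (𝒜 (γ₁ + γ₂)).prod (𝒱 (γ₁ + γ₂))) ∧
    (∀ ⦃γ₁ γ₂ : Γ⦄ ⦃X Y : A × V⦄, X ∈ (𝒜 γ₁).prod (𝒱 γ₁) → Y ∈ (𝒜 γ₂).prod (𝒱 γ₂) →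
        sdDot ε μ s γ₁ γ₂ X Y = ε γ₁ γ₂ • sdDot ε μ s γ₂ γ₁ Y X) ∧
    (∀ ⦃γ₁ γ₂ γ₃ : Γ⦄ ⦃X Y Z : A × V⦄, X ∈ (𝒜 γ₁).prod (𝒱 γ₁) →
        Y ∈ (𝒜 γ₂).prod (𝒱 γ₂) → Z ∈ (𝒜 γ₃).prod (𝒱 γ₃) →
        sdDot ε μ s (γ₁ + γ₂) γ₃ (sdDot ε μ s γ₁ γ₂ X Y) (sdEnd α β Z)
          = sdDot ε μ s γ₁ (γ₂ + γ₃) (sdEnd α β X) (sdDot ε μ s γ₂ γ₃ Y Z)) := by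
  obtain ⟨-, hinv, hadd₂, hadd₁⟩ := hε
  -- swapping the two module actions at the cost of a commutation factor
  have hswap : ∀ ⦃a b c : Γ⦄ ⦃x y : A⦄ ⦃v : V⦄, x ∈ 𝒜 a → y ∈ 𝒜 b → v ∈ 𝒱 c →
      s (α x) (s y v) = ε a b • s (α y) (s x v) := by
    intro a b c x y v hx hy hv
    rw [← hbimod hx hy hv, ← hbimod hy hx hv, hcomm hx hy, map_smul, LinearMap.smul_apply]
  refine ⟨?_, ?_, ?_⟩
  · rintro a b ⟨x, u⟩ ⟨y, v⟩ ⟨hx, hu⟩ ⟨hy, hv⟩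
    refine ⟨hμ hx hy, Submodule.add_mem _ (hs hx hv) (Submodule.smul_mem _ _ ?_)⟩
    have h := hs hy hu
    rwa [add_comm] at h
  · rintro a b ⟨x, u⟩ ⟨y, v⟩ ⟨hx, hu⟩ ⟨hy, hv⟩
    refine Prod.ext (hcomm hx hy) ?_
    simp only [sdDot, Prod.smul_snd, smul_add, smul_smul, hinv, one_smul]
    exact add_comm _ _
  · rintro a b c ⟨x, u⟩ ⟨y, v⟩ ⟨z, w⟩ ⟨hx, hu⟩ ⟨hy, hv⟩ ⟨hz, hw⟩
    refine Prod.ext (hassoc hx hy hz) ?_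
    simp only at hx hu hy hv hz hw
    simp only [sdDot, sdEnd, map_add, map_smul, smul_add, smul_smul]
    rw [hbimod hx hy hw, hbimod hy hz hu, hswap hz hx hv, hswap hz hy hu, smul_smul, smul_smul,
      hadd₁, hadd₂, add_assoc]
    have h1 : ε a c * ε b c * ε c a = ε b c := by
      linear_combination ε b c * hinv a c
    have h2 : ε a c * ε b c * ε a b * ε c b = ε a b * ε a c := by
      linear_combination ε a c * ε a b * hinv b c
    rw [h1, h2]
end

section
/- If (l, r, β, V) is a bimodule of a Hom-Novikov color Hom-algebra (A, ·, ε, α), then A ⊕ V with product (x₁+v₁)∗(x₂+v₂) = x₁·x₂ + l(x₁)v₂ + r(x₂)v₁ and twisting map α⊕β is a Hom-Novikov color Hom-algebra. -/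
open scoped TensorProduct

/-- semidirect product of a Hom-Novikov color Hom-algebra with a
bimodule `(l, r, β, V)`. -/
theorem semidirect_homNovikov
    {K Γ A V : Type*} [Field K] [AddCommGroup Γ] [AddCommGroup A] [Module K A]
    [AddCommGroup V] [Module K V]
    (𝒜 : Γ → Submodule K A) (𝒱 : Γ → Submodule K V) (ε : Γ → Γ → K)
    (μ : A →ₗ[K] A →ₗ[K] A) (α : A →ₗ[K] A) (β : V →ₗ[K] V)
    (l r : A →ₗ[K] V →ₗ[K] V)
    (hε : IsCommFactor ε) (hμ : GradedMul 𝒜 μ) (hα : GradedEnd 𝒜 α)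
    (hβ : ∀ ⦃γ : Γ⦄ ⦃v : V⦄, v ∈ 𝒱 γ → β v ∈ 𝒱 γ)
    (hl : ∀ ⦃γ₁ γ₂ : Γ⦄ ⦃x : A⦄ ⦃v : V⦄, x ∈ 𝒜 γ₁ → v ∈ 𝒱 γ₂ → l x v ∈ 𝒱 (γ₁ + γ₂))
    (hr : ∀ ⦃γ₁ γ₂ : Γ⦄ ⦃x : A⦄ ⦃v : V⦄, x ∈ 𝒜 γ₁ → v ∈ 𝒱 γ₂ → r x v ∈ 𝒱 (γ₁ + γ₂))
    (hNov : IsHomNovikov 𝒜 ε μ α)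
    (hb1 : ∀ ⦃γ₁ γ₂ γ₃ : Γ⦄ ⦃x y : A⦄ ⦃v : V⦄, x ∈ 𝒜 γ₁ → y ∈ 𝒜 γ₂ → v ∈ 𝒱 γ₃ →
      l (μ x y) (β v) - l (α x) (l y v) = ε γ₁ γ₂ • (l (μ y x) (β v) - l (α y) (l x v)))
    (hb2 : ∀ ⦃γ₁ γ₂ γ₃ : Γ⦄ ⦃x y : A⦄ ⦃v : V⦄, x ∈ 𝒜 γ₁ → y ∈ 𝒜 γ₂ → v ∈ 𝒱 γ₃ →
      r (α y) (l x v) - l (α x) (r y v) = ε γ₁ γ₃ • (r (α y) (r x v) - r (μ x y) (β v)))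
    (hb3 : ∀ ⦃γ₁ γ₂ γ₃ : Γ⦄ ⦃x y : A⦄ ⦃v : V⦄, x ∈ 𝒜 γ₁ → y ∈ 𝒜 γ₂ → v ∈ 𝒱 γ₃ →
      r (α y) (r x v) - r (μ x y) (β v) = ε γ₃ γ₁ • (r (α y) (l x v) - l (α x) (r y v)))
    (hb4 : ∀ ⦃γ₁ γ₂ γ₃ : Γ⦄ ⦃x y : A⦄ ⦃v : V⦄, x ∈ 𝒜 γ₁ → y ∈ 𝒜 γ₂ → v ∈ 𝒱 γ₃ →
      l (μ x y) (β v) = ε γ₂ γ₃ • r (α y) (l x v))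
    (hb5 : ∀ ⦃γ₁ γ₂ γ₃ : Γ⦄ ⦃x y : A⦄ ⦃v : V⦄, x ∈ 𝒜 γ₁ → y ∈ 𝒜 γ₂ → v ∈ 𝒱 γ₃ →
      r (α y) (l x v) = ε γ₃ γ₂ • l (μ x y) (β v))
    (hb6 : ∀ ⦃γ₁ γ₂ γ₃ : Γ⦄ ⦃x y : A⦄ ⦃v : V⦄, x ∈ 𝒜 γ₁ → y ∈ 𝒜 γ₂ → v ∈ 𝒱 γ₃ →
      r (α y) (r x v) = ε γ₁ γ₂ • r (α x) (r y v)) :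
    (∀ ⦃γ₁ γ₂ : Γ⦄ ⦃X Y : A × V⦄, X ∈ (𝒜 γ₁).prod (𝒱 γ₁) → Y ∈ (𝒜 γ₂).prod (𝒱 γ₂) →
        sdDiam μ l r X Y ∈ (𝒜 (γ₁ + γ₂)).prod (𝒱 (γ₁ + γ₂))) ∧
    (∀ ⦃γ₁ γ₂ γ₃ : Γ⦄ ⦃X Y Z : A × V⦄, X ∈ (𝒜 γ₁).prod (𝒱 γ₁) →
        Y ∈ (𝒜 γ₂).prod (𝒱 γ₂) → Z ∈ (𝒜 γ₃).prod (𝒱 γ₃) →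
        sdDiam μ l r (sdDiam μ l r X Y) (sdEnd α β Z)
            - sdDiam μ l r (sdEnd α β X) (sdDiam μ l r Y Z)
          = ε γ₁ γ₂ • (sdDiam μ l r (sdDiam μ l r Y X) (sdEnd α β Z)
            - sdDiam μ l r (sdEnd α β Y) (sdDiam μ l r X Z))) ∧
    (∀ ⦃γ₁ γ₂ γ₃ : Γ⦄ ⦃X Y Z : A × V⦄, X ∈ (𝒜 γ₁).prod (𝒱 γ₁) →
        Y ∈ (𝒜 γ₂).prod (𝒱 γ₂) → Z ∈ (𝒜 γ₃).prod (𝒱 γ₃) →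
        sdDiam μ l r (sdDiam μ l r X Y) (sdEnd α β Z)
          = ε γ₂ γ₃ • sdDiam μ l r (sdDiam μ l r X Z) (sdEnd α β Y)) := by
  refine ⟨?_, ?_, ?_⟩
  · rintro γ₁ γ₂ ⟨x, u⟩ ⟨y, v⟩ ⟨hx, hu⟩ ⟨hy, hv⟩
    refine ⟨hμ hx hy, Submodule.add_mem _ (hl hx hv) ?_⟩
    have h := hr hy hu
    rwa [add_comm] at h
  · rintro γ₁ γ₂ γ₃ ⟨x, u⟩ ⟨y, v⟩ ⟨z, w⟩ ⟨hx, hu⟩ ⟨hy, hv⟩ ⟨hz, hw⟩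
    refine Prod.ext (hNov.1 hx hy hz) ?_
    have h1 := hb1 hx hy hw
    have h2 := hb2 hx hz hv
    have h3 := hb3 hy hz hu
    simp only [sdDiam, sdEnd, Prod.snd_sub, Prod.smul_snd, map_add]
    have e : ∀ a b c d e f : V, a + (b + c) - (d + e + f) = (a - d) + (b - e) + (c - f) := by
      intros; abel
    rw [e, e, h1, h2, h3, smul_add, smul_add]
    abel
  · rintro γ₁ γ₂ γ₃ ⟨x, u⟩ ⟨y, v⟩ ⟨z, w⟩ ⟨hx, hu⟩ ⟨hy, hv⟩ ⟨hz, hw⟩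
    refine Prod.ext (hNov.2 hx hy hz) ?_
    have h1 := hb4 hx hy hw
    have h2 := hb5 hx hz hv
    have h3 := hb6 hy hz hu
    simp only [sdDiam, sdEnd, Prod.smul_snd, map_add, smul_add]
    rw [h1, h2, h3]
    abel
end

section
/- If (A, ·, ε, α) is a Hom-Novikov color Hom-algebra, then the bracket [x,y] = x·y − ε(x,y) y·x makes (A, [·,·], ε, α) a Hom-Lie color Hom-algebra. -/
open scoped TensorProduct

/-- the ε-commutator of a Hom-Novikov color Hom-algebra is a
Hom-Lie color Hom-algebra bracket. -/
theorem homNovikov_to_homLie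
    {K Γ A : Type*} [Field K] [AddCommGroup Γ] [AddCommGroup A] [Module K A]
    (𝒜 : Γ → Submodule K A) (ε : Γ → Γ → K)
    (μ : A →ₗ[K] A →ₗ[K] A) (α : A →ₗ[K] A)
    (hε : IsCommFactor ε) (hμ : GradedMul 𝒜 μ) (hα : GradedEnd 𝒜 α)
    (hNov : IsHomNovikov 𝒜 ε μ α) :
    (∀ ⦃γ₁ γ₂ : Γ⦄ ⦃x y : A⦄, x ∈ 𝒜 γ₁ → y ∈ 𝒜 γ₂ →
        brkt ε μ γ₁ γ₂ x y ∈ 𝒜 (γ₁ + γ₂)) ∧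
    (∀ ⦃γ₁ γ₂ : Γ⦄ ⦃x y : A⦄, x ∈ 𝒜 γ₁ → y ∈ 𝒜 γ₂ →
        brkt ε μ γ₁ γ₂ x y = -(ε γ₁ γ₂ • brkt ε μ γ₂ γ₁ y x)) ∧
    (∀ ⦃γ₁ γ₂ γ₃ : Γ⦄ ⦃x y z : A⦄, x ∈ 𝒜 γ₁ → y ∈ 𝒜 γ₂ → z ∈ 𝒜 γ₃ →
        ε γ₃ γ₁ • brkt ε μ γ₁ (γ₂ + γ₃) (α x) (brkt ε μ γ₂ γ₃ y z)
          + ε γ₁ γ₂ • brkt ε μ γ₂ (γ₃ + γ₁) (α y) (brkt ε μ γ₃ γ₁ z x)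
          + ε γ₂ γ₃ • brkt ε μ γ₃ (γ₁ + γ₂) (α z) (brkt ε μ γ₁ γ₂ x y) = 0) := by
  obtain ⟨-, h1, hr, -⟩ := hε
  obtain ⟨hN, -⟩ := hNov
  refine ⟨?_, ?_, ?_⟩
  · intro γ₁ γ₂ x y hx hy
    refine Submodule.sub_mem _ (hμ hx hy) (Submodule.smul_mem _ _ ?_)
    rw [add_comm]
    exact hμ hy hx
  · intro γ₁ γ₂ x y hx hy
    simp only [brkt, smul_sub, smul_smul, h1, one_smul, neg_sub]
  · intro γ₁ γ₂ γ₃ x y z hx hy hz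
    have e1 : ε γ₃ γ₁ * (ε γ₁ γ₂ * ε γ₁ γ₃) = ε γ₁ γ₂ := by
      linear_combination ε γ₁ γ₂ * h1 γ₃ γ₁
    have e2 : ε γ₁ γ₂ * (ε γ₂ γ₃ * ε γ₂ γ₁) = ε γ₂ γ₃ := by
      linear_combination ε γ₂ γ₃ * h1 γ₁ γ₂
    have e3 : ε γ₂ γ₃ * (ε γ₃ γ₁ * ε γ₃ γ₂) = ε γ₃ γ₁ := by
      linear_combination ε γ₃ γ₁ * h1 γ₂ γ₃
    have n1 := hN hx hy hz
    have n2 := hN hy hz hx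
    have n3 := hN hz hx hy
    simp only [brkt, hr, map_sub, map_smul, LinearMap.sub_apply, LinearMap.smul_apply]
    rw [smul_sub (ε γ₃ γ₁), smul_sub (ε γ₁ γ₂) (μ (α y) _ - _), smul_sub (ε γ₂ γ₃) (μ (α z) _ - _),
      smul_smul _ (ε γ₁ γ₂ * ε γ₁ γ₃), smul_smul _ (ε γ₂ γ₃ * ε γ₂ γ₁),
      smul_smul _ (ε γ₃ γ₁ * ε γ₃ γ₂), e1, e2, e3]
    linear_combination (norm := module) (-ε γ₃ γ₁) • n1 - ε γ₁ γ₂ • n2 - ε γ₂ γ₃ • n3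
end

section
/- If (A, ·, ε) is a Novikov color algebra and α: A → A is a morphism of Novikov color algebras, then A with the product x ·_α y = α(x·y) and twisting map α is a Hom-Novikov color Hom-algebra (Yau twist). -/
open scoped TensorProduct

/-- the Yau twist of a Novikov color algebra along a morphism `α`
is a Hom-Novikov color Hom-algebra. -/
theorem yauTwist_novikov
    {K Γ A : Type*} [Field K] [AddCommGroup Γ] [AddCommGroup A] [Module K A]
    (𝒜 : Γ → Submodule K A) (ε : Γ → Γ → K)
    (μ : A →ₗ[K] A →ₗ[K] A) (α : A →ₗ[K] A)
    (hε : IsCommFactor ε) (hμ : GradedMul 𝒜 μ)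
    (hNov : IsHomNovikov 𝒜 ε μ (LinearMap.id))
    (hα : GradedEnd 𝒜 α) (hmor : ∀ x y : A, α (μ x y) = μ (α x) (α y)) :
    GradedMul 𝒜 (twistMul α μ) ∧ IsHomNovikov 𝒜 ε (twistMul α μ) α := by
  have tw : ∀ x y : A, twistMul α μ x y = α (μ x y) := fun _ _ => rfl
  obtain ⟨h1, h2⟩ := hNov
  refine ⟨fun γ₁ γ₂ x y hx hy => ?_, fun γ₁ γ₂ γ₃ x y z hx hy hz => ?_,
    fun γ₁ γ₂ γ₃ x y z hx hy hz => ?_⟩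
  · rw [tw]
    exact hα (hμ hx hy)
  · have h := congrArg (fun t => α (α t)) (h1 hx hy hz)
    simpa only [tw, ← hmor, map_sub, map_smul, LinearMap.id_apply] using h
  · have h := congrArg (fun t => α (α t)) (h2 hx hy hz)
    simpa only [tw, ← hmor, map_smul, LinearMap.id_apply] using h
end

section
/- If (ρ, β, V) is a representation of a Hom-Lie color Hom-algebra (A, [·,·], ε, α), then A ⊕ V with bracket [x₁+v₁, x₂+v₂]' = [x₁,x₂] + ρ(x₁)v₂ − ε(v₁,x₂)ρ(x₂)v₁ and twisting α⊕β is a Hom-Lie color Hom-algebra. -/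
open scoped TensorProduct

/-- semidirect product of a Hom-Lie color Hom-algebra with a
representation `(ρ, β, V)`. -/
theorem semidirect_homLie
    {K Γ A V : Type*} [Field K] [AddCommGroup Γ] [AddCommGroup A] [Module K A]
    [AddCommGroup V] [Module K V]
    (𝒜 : Γ → Submodule K A) (𝒱 : Γ → Submodule K V) (ε : Γ → Γ → K)
    (br : A →ₗ[K] A →ₗ[K] A) (α : A →ₗ[K] A) (β : V →ₗ[K] V) (ρ : A →ₗ[K] V →ₗ[K] V)
    (hε : IsCommFactor ε) (hbr : GradedMul 𝒜 br) (hα : GradedEnd 𝒜 α)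
    (hβ : ∀ ⦃γ : Γ⦄ ⦃v : V⦄, v ∈ 𝒱 γ → β v ∈ 𝒱 γ)
    (hρ : ∀ ⦃γ₁ γ₂ : Γ⦄ ⦃x : A⦄ ⦃v : V⦄, x ∈ 𝒜 γ₁ → v ∈ 𝒱 γ₂ → ρ x v ∈ 𝒱 (γ₁ + γ₂))
    (hLie : IsHomLie 𝒜 ε br α)
    (hrep : ∀ ⦃γ₁ γ₂ γ₃ : Γ⦄ ⦃x y : A⦄ ⦃v : V⦄, x ∈ 𝒜 γ₁ → y ∈ 𝒜 γ₂ → v ∈ 𝒱 γ₃ →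
      ρ (br x y) (β v) = ρ (α x) (ρ y v) - ε γ₁ γ₂ • ρ (α y) (ρ x v)) :
    (∀ ⦃γ₁ γ₂ : Γ⦄ ⦃X Y : A × V⦄, X ∈ (𝒜 γ₁).prod (𝒱 γ₁) → Y ∈ (𝒜 γ₂).prod (𝒱 γ₂) →
        sdBr ε br ρ γ₁ γ₂ X Y ∈ (𝒜 (γ₁ + γ₂)).prod (𝒱 (γ₁ + γ₂))) ∧
    (∀ ⦃γ₁ γ₂ : Γ⦄ ⦃X Y : A × V⦄, X ∈ (𝒜 γ₁).prod (𝒱 γ₁) → Y ∈ (𝒜 γ₂).prod (𝒱 γ₂) →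
        sdBr ε br ρ γ₁ γ₂ X Y = -(ε γ₁ γ₂ • sdBr ε br ρ γ₂ γ₁ Y X)) ∧
    (∀ ⦃γ₁ γ₂ γ₃ : Γ⦄ ⦃X Y Z : A × V⦄, X ∈ (𝒜 γ₁).prod (𝒱 γ₁) →
        Y ∈ (𝒜 γ₂).prod (𝒱 γ₂) → Z ∈ (𝒜 γ₃).prod (𝒱 γ₃) →
        ε γ₃ γ₁ • sdBr ε br ρ γ₁ (γ₂ + γ₃) (sdEnd α β X) (sdBr ε br ρ γ₂ γ₃ Y Z)
          + ε γ₁ γ₂ • sdBr ε br ρ γ₂ (γ₃ + γ₁) (sdEnd α β Y) (sdBr ε br ρ γ₃ γ₁ Z X)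
          + ε γ₂ γ₃ • sdBr ε br ρ γ₃ (γ₁ + γ₂) (sdEnd α β Z) (sdBr ε br ρ γ₁ γ₂ X Y)
          = 0) := by
  obtain ⟨-, hinv, hadd, -⟩ := hε
  obtain ⟨hskew, hjac⟩ := hLie
  refine ⟨?_, ?_, ?_⟩
  · rintro γ₁ γ₂ ⟨x, u⟩ ⟨y, v⟩ ⟨hx, hu⟩ ⟨hy, hv⟩
    refine ⟨hbr hx hy, Submodule.sub_mem _ (hρ hx hv) (Submodule.smul_mem _ _ ?_)⟩
    rw [add_comm]
    exact hρ hy hu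
  · rintro γ₁ γ₂ ⟨x, u⟩ ⟨y, v⟩ ⟨hx, hu⟩ ⟨hy, hv⟩
    refine Prod.ext (hskew hx hy) ?_
    have h := hinv γ₁ γ₂
    simp only [sdBr, Prod.snd_neg, Prod.smul_snd, smul_sub, smul_smul, h]
    module
  · rintro γ₁ γ₂ γ₃ ⟨x, u⟩ ⟨y, v⟩ ⟨z, w⟩ ⟨hx, hu⟩ ⟨hy, hv⟩ ⟨hz, hw⟩
    refine Prod.ext (hjac hx hy hz) ?_
    have h12 := hinv γ₁ γ₂
    have h23 := hinv γ₂ γ₃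
    have h31 := hinv γ₃ γ₁
    simp only [sdBr, sdEnd, Prod.snd_add, Prod.smul_snd, Prod.snd_zero, hadd,
      hrep hy hz hu, hrep hz hx hv, hrep hx hy hw, map_sub, map_smul]
    match_scalars <;> grind
end

section
/- If (s, l, r, β, V) is a bimodule of a Hom-Novikov-Poisson color Hom-algebra (A, ·, ⋄, ε, α), then A ⊕ V with products (x₁+v₁)·'(x₂+v₂) = x₁·x₂ + s(x₁)v₂ + ε(v₁,x₂)s(x₂)v₁ and (x₁+v₁)⋄'(x₂+v₂) = x₁⋄x₂ + l(x₁)v₂ + r(x₂)v₁, and twisting α⊕β, is a Hom-Novikov-Poisson color Hom-algebra. -/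
open scoped TensorProduct

/-- semidirect product of a Hom-Novikov-Poisson color Hom-algebra
with a bimodule `(s, l, r, β, V)`. -/
theorem semidirect_homNovikovPoisson
    {K Γ A V : Type*} [Field K] [AddCommGroup Γ] [AddCommGroup A] [Module K A]
    [AddCommGroup V] [Module K V]
    (𝒜 : Γ → Submodule K A) (𝒱 : Γ → Submodule K V) (ε : Γ → Γ → K)
    (μ d : A →ₗ[K] A →ₗ[K] A) (α : A →ₗ[K] A) (β : V →ₗ[K] V)
    (s l r : A →ₗ[K] V →ₗ[K] V)
    (hε : IsCommFactor ε) (hHNP : IsHNP 𝒜 ε μ d α)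
    (hβ : ∀ ⦃γ : Γ⦄ ⦃v : V⦄, v ∈ 𝒱 γ → β v ∈ 𝒱 γ)
    (hsg : ∀ ⦃γ₁ γ₂ : Γ⦄ ⦃x : A⦄ ⦃v : V⦄, x ∈ 𝒜 γ₁ → v ∈ 𝒱 γ₂ → s x v ∈ 𝒱 (γ₁ + γ₂))
    (hlg : ∀ ⦃γ₁ γ₂ : Γ⦄ ⦃x : A⦄ ⦃v : V⦄, x ∈ 𝒜 γ₁ → v ∈ 𝒱 γ₂ → l x v ∈ 𝒱 (γ₁ + γ₂))
    (hrg : ∀ ⦃γ₁ γ₂ : Γ⦄ ⦃x : A⦄ ⦃v : V⦄, x ∈ 𝒜 γ₁ → v ∈ 𝒱 γ₂ → r x v ∈ 𝒱 (γ₁ + γ₂))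
    -- `(s, β, V)` is a bimodule of the ε-commutative Hom-associative algebra `(A, μ)`
    (hsbimod : ∀ ⦃γ₁ γ₂ γ₃ : Γ⦄ ⦃x y : A⦄ ⦃v : V⦄, x ∈ 𝒜 γ₁ → y ∈ 𝒜 γ₂ → v ∈ 𝒱 γ₃ →
      s (μ x y) (β v) = s (α x) (s y v))
    -- `(l, r, β, V)` is a bimodule of the Hom-Novikov algebra `(A, d)`
    (hb1 : ∀ ⦃γ₁ γ₂ γ₃ : Γ⦄ ⦃x y : A⦄ ⦃v : V⦄, x ∈ 𝒜 γ₁ → y ∈ 𝒜 γ₂ → v ∈ 𝒱 γ₃ →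
      l (d x y) (β v) - l (α x) (l y v) = ε γ₁ γ₂ • (l (d y x) (β v) - l (α y) (l x v)))
    (hb2 : ∀ ⦃γ₁ γ₂ γ₃ : Γ⦄ ⦃x y : A⦄ ⦃v : V⦄, x ∈ 𝒜 γ₁ → y ∈ 𝒜 γ₂ → v ∈ 𝒱 γ₃ →
      r (α y) (l x v) - l (α x) (r y v) = ε γ₁ γ₃ • (r (α y) (r x v) - r (d x y) (β v)))
    (hb3 : ∀ ⦃γ₁ γ₂ γ₃ : Γ⦄ ⦃x y : A⦄ ⦃v : V⦄, x ∈ 𝒜 γ₁ → y ∈ 𝒜 γ₂ → v ∈ 𝒱 γ₃ →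
      r (α y) (r x v) - r (d x y) (β v) = ε γ₃ γ₁ • (r (α y) (l x v) - l (α x) (r y v)))
    (hb4 : ∀ ⦃γ₁ γ₂ γ₃ : Γ⦄ ⦃x y : A⦄ ⦃v : V⦄, x ∈ 𝒜 γ₁ → y ∈ 𝒜 γ₂ → v ∈ 𝒱 γ₃ →
      l (d x y) (β v) = ε γ₂ γ₃ • r (α y) (l x v))
    (hb5 : ∀ ⦃γ₁ γ₂ γ₃ : Γ⦄ ⦃x y : A⦄ ⦃v : V⦄, x ∈ 𝒜 γ₁ → y ∈ 𝒜 γ₂ → v ∈ 𝒱 γ₃ →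
      r (α y) (l x v) = ε γ₃ γ₂ • l (d x y) (β v))
    (hb6 : ∀ ⦃γ₁ γ₂ γ₃ : Γ⦄ ⦃x y : A⦄ ⦃v : V⦄, x ∈ 𝒜 γ₁ → y ∈ 𝒜 γ₂ → v ∈ 𝒱 γ₃ →
      r (α y) (r x v) = ε γ₁ γ₂ • r (α x) (r y v))
    -- the five compatibility conditions of a Hom-Novikov-Poisson bimodule
    (hc1 : ∀ ⦃γ₁ γ₂ γ₃ : Γ⦄ ⦃x y : A⦄ ⦃v : V⦄, x ∈ 𝒜 γ₁ → y ∈ 𝒜 γ₂ → v ∈ 𝒱 γ₃ →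
      l (μ x y) (β v) = ε γ₁ γ₂ • s (α y) (l x v))
    (hc2 : ∀ ⦃γ₁ γ₂ γ₃ : Γ⦄ ⦃x y : A⦄ ⦃v : V⦄, x ∈ 𝒜 γ₁ → y ∈ 𝒜 γ₂ → v ∈ 𝒱 γ₃ →
      r (α y) (s x v) = ε γ₃ γ₂ • s (d x y) (β v))
    (hc3 : ∀ ⦃γ₁ γ₂ γ₃ : Γ⦄ ⦃x y : A⦄ ⦃v : V⦄, x ∈ 𝒜 γ₁ → y ∈ 𝒜 γ₂ → v ∈ 𝒱 γ₃ →
      r (α y) (s x v) = s (α x) (r y v))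
    (hc4 : ∀ ⦃γ₁ γ₂ γ₃ : Γ⦄ ⦃x y : A⦄ ⦃v : V⦄, x ∈ 𝒜 γ₁ → y ∈ 𝒜 γ₂ → v ∈ 𝒱 γ₃ →
      s (d x y) (β v) - l (α x) (s y v)
        = ε γ₁ γ₂ • (s (d y x) (β v) - l (α y) (s x v)))
    (hc5 : ∀ ⦃γ₁ γ₂ γ₃ : Γ⦄ ⦃x y : A⦄ ⦃v : V⦄, x ∈ 𝒜 γ₁ → y ∈ 𝒜 γ₂ → v ∈ 𝒱 γ₃ →
      ε (γ₁ + γ₃) γ₂ • (s (α y) (l x v) - ε γ₁ γ₃ • s (α y) (r x v))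
        = ε γ₃ γ₂ • l (α x) (s y v) - ε γ₁ γ₃ • r (μ x y) (β v)) :
    -- the semidirect product is a Hom-Novikov-Poisson color Hom-algebra
    (∀ ⦃γ₁ γ₂ : Γ⦄ ⦃X Y : A × V⦄, X ∈ (𝒜 γ₁).prod (𝒱 γ₁) → Y ∈ (𝒜 γ₂).prod (𝒱 γ₂) →
        sdDot ε μ s γ₁ γ₂ X Y ∈ (𝒜 (γ₁ + γ₂)).prod (𝒱 (γ₁ + γ₂)) ∧
        sdDiam d l r X Y ∈ (𝒜 (γ₁ + γ₂)).prod (𝒱 (γ₁ + γ₂))) ∧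
    (∀ ⦃γ₁ γ₂ : Γ⦄ ⦃X Y : A × V⦄, X ∈ (𝒜 γ₁).prod (𝒱 γ₁) → Y ∈ (𝒜 γ₂).prod (𝒱 γ₂) →
        sdDot ε μ s γ₁ γ₂ X Y = ε γ₁ γ₂ • sdDot ε μ s γ₂ γ₁ Y X) ∧
    (∀ ⦃γ₁ γ₂ γ₃ : Γ⦄ ⦃X Y Z : A × V⦄, X ∈ (𝒜 γ₁).prod (𝒱 γ₁) →
        Y ∈ (𝒜 γ₂).prod (𝒱 γ₂) → Z ∈ (𝒜 γ₃).prod (𝒱 γ₃) →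
        sdDot ε μ s (γ₁ + γ₂) γ₃ (sdDot ε μ s γ₁ γ₂ X Y) (sdEnd α β Z)
          = sdDot ε μ s γ₁ (γ₂ + γ₃) (sdEnd α β X) (sdDot ε μ s γ₂ γ₃ Y Z)) ∧
    (∀ ⦃γ₁ γ₂ γ₃ : Γ⦄ ⦃X Y Z : A × V⦄, X ∈ (𝒜 γ₁).prod (𝒱 γ₁) →
        Y ∈ (𝒜 γ₂).prod (𝒱 γ₂) → Z ∈ (𝒜 γ₃).prod (𝒱 γ₃) →
        sdDiam d l r (sdDiam d l r X Y) (sdEnd α β Z)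
            - sdDiam d l r (sdEnd α β X) (sdDiam d l r Y Z)
          = ε γ₁ γ₂ • (sdDiam d l r (sdDiam d l r Y X) (sdEnd α β Z)
            - sdDiam d l r (sdEnd α β Y) (sdDiam d l r X Z))) ∧
    (∀ ⦃γ₁ γ₂ γ₃ : Γ⦄ ⦃X Y Z : A × V⦄, X ∈ (𝒜 γ₁).prod (𝒱 γ₁) →
        Y ∈ (𝒜 γ₂).prod (𝒱 γ₂) → Z ∈ (𝒜 γ₃).prod (𝒱 γ₃) →
        sdDiam d l r (sdDiam d l r X Y) (sdEnd α β Z)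
          = ε γ₂ γ₃ • sdDiam d l r (sdDiam d l r X Z) (sdEnd α β Y)) ∧
    (∀ ⦃γ₁ γ₂ γ₃ : Γ⦄ ⦃X Y Z : A × V⦄, X ∈ (𝒜 γ₁).prod (𝒱 γ₁) →
        Y ∈ (𝒜 γ₂).prod (𝒱 γ₂) → Z ∈ (𝒜 γ₃).prod (𝒱 γ₃) →
        sdDiam d l r (sdDot ε μ s γ₁ γ₂ X Y) (sdEnd α β Z)
          = ε γ₂ γ₃ • sdDot ε μ s (γ₁ + γ₃) γ₂ (sdDiam d l r X Z) (sdEnd α β Y)) ∧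
    (∀ ⦃γ₁ γ₂ γ₃ : Γ⦄ ⦃X Y Z : A × V⦄, X ∈ (𝒜 γ₁).prod (𝒱 γ₁) →
        Y ∈ (𝒜 γ₂).prod (𝒱 γ₂) → Z ∈ (𝒜 γ₃).prod (𝒱 γ₃) →
        sdDot ε μ s (γ₁ + γ₂) γ₃ (sdDiam d l r X Y) (sdEnd α β Z)
            - sdDiam d l r (sdEnd α β X) (sdDot ε μ s γ₂ γ₃ Y Z)
          = ε γ₁ γ₂ • (sdDot ε μ s (γ₂ + γ₁) γ₃ (sdDiam d l r Y X) (sdEnd α β Z)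
            - sdDiam d l r (sdEnd α β Y) (sdDot ε μ s γ₁ γ₃ X Z))) := by
  obtain ⟨_, hs, ha, ha'⟩ := hε
  obtain ⟨gμ, gd, gα, hcomm, hassoc, ⟨hn1, hn2⟩, hk1, hk2⟩ := hHNP
  refine ⟨?_, ?_, ?_, ?_, ?_, ?_, ?_⟩
  · rintro a b ⟨x, u⟩ ⟨y, v⟩ ⟨hx, hu⟩ ⟨hy, hv⟩
    refine ⟨⟨gμ hx hy, ?_⟩, ⟨gd hx hy, ?_⟩⟩
    · refine Submodule.add_mem _ (hsg hx hv) (Submodule.smul_mem _ _ ?_)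
      rw [add_comm]
      exact hsg hy hu
    · refine Submodule.add_mem _ (hlg hx hv) ?_
      rw [add_comm]
      exact hrg hy hu
  · rintro a b ⟨x, u⟩ ⟨y, v⟩ ⟨hx, hu⟩ ⟨hy, hv⟩
    dsimp only at hx hu hy hv
    refine Prod.ext (hcomm hx hy) ?_
    simp only [sdDot, Prod.smul_snd]
    linear_combination (norm := module) -(hs a b) • s x v
  · rintro a b c ⟨x, u⟩ ⟨y, v⟩ ⟨z, w⟩ ⟨hx, hu⟩ ⟨hy, hv⟩ ⟨hz, hw⟩
    dsimp only at hx hu hy hv hz hw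
    refine Prod.ext (hassoc hx hy hz) ?_
    have e1 := hsbimod hx hy hw
    have e2 := hsbimod hz hx hv
    have e3 := hsbimod hx hz hv
    have e4 := hsbimod hz hy hu
    have e5 := hsbimod hy hz hu
    have e6 : s (μ z x) (β v) = ε c a • s (μ x z) (β v) := by
      rw [hcomm hz hx]; simp
    have e7 : s (μ z y) (β u) = ε c b • s (μ y z) (β u) := by
      rw [hcomm hz hy]; simp
    simp only [sdDot, sdEnd, ha, ha', map_add, map_smul]
    rw [e1, ← e2, ← e3, ← e4, e6, e7]
    linear_combination (norm := module) (ε b c * hs a c) • s (μ x z) (β v)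
      + (ε a b * ε a c * hs b c) • s (μ y z) (β u)
  · rintro a b c ⟨x, u⟩ ⟨y, v⟩ ⟨z, w⟩ ⟨hx, hu⟩ ⟨hy, hv⟩ ⟨hz, hw⟩
    dsimp only at hx hu hy hv hz hw
    refine Prod.ext (hn1 hx hy hz) ?_
    simp only [sdDiam, sdEnd, map_add, Prod.snd_sub, Prod.smul_snd]
    linear_combination (norm := module) hb1 hx hy hw + hb2 hx hz hv + hb3 hy hz hu
  · rintro a b c ⟨x, u⟩ ⟨y, v⟩ ⟨z, w⟩ ⟨hx, hu⟩ ⟨hy, hv⟩ ⟨hz, hw⟩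
    dsimp only at hx hu hy hv hz hw
    refine Prod.ext (hn2 hx hy hz) ?_
    simp only [sdDiam, sdEnd, map_add, Prod.smul_snd]
    linear_combination (norm := module) hb4 hx hy hw + hb5 hx hz hv + hb6 hy hz hu
  · rintro a b c ⟨x, u⟩ ⟨y, v⟩ ⟨z, w⟩ ⟨hx, hu⟩ ⟨hy, hv⟩ ⟨hz, hw⟩
    dsimp only at hx hu hy hv hz hw
    refine Prod.ext (hk1 hx hy hz) ?_
    simp only [sdDiam, sdDot, sdEnd, ha, ha', map_add, map_smul, Prod.smul_snd]
    linear_combination (norm := module) hc1 hx hy hw + hc2 hx hz hv + ε a b • hc3 hy hz hu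
      - (ε a b * hs b c) • s (α y) (l x w) - (ε a b * hs b c) • s (α y) (r z u)
  · rintro a b c ⟨x, u⟩ ⟨y, v⟩ ⟨z, w⟩ ⟨hx, hu⟩ ⟨hy, hv⟩ ⟨hz, hw⟩
    dsimp only at hx hu hy hv hz hw
    refine Prod.ext (hk2 hx hy hz) ?_
    have e1 := hc5 hx hz hv
    have e2 := hc5 hy hz hu
    simp only [ha, ha'] at e1 e2
    simp only [sdDiam, sdDot, sdEnd, ha, ha', map_add, map_smul, Prod.snd_sub, Prod.smul_snd]
    linear_combination (norm := module) hc4 hx hy hw + e1 - ε a b • e2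
      - (ε a c * ε b c * hs a b) • s (α z) (r y u) + hs a b • r (μ y z) (β u)
end

section
/- In any multiplicative transposed Hom-Poisson color Hom-algebra, for all homogeneous h,x,y,z, the cyclic sum over (x,y,z) of ε(z,x)[α(h)·[x,y], α²(z)] equals 0. -/
open scoped TensorProduct

/-- in a multiplicative transposed Hom-Poisson color Hom-algebra the
cyclic sum of `ε(z,x)[α(h)·[x,y], α²(z)]` vanishes. -/
theorem transposedHomPoisson_cyclic_bracket_h
    {K Γ A : Type*} [Field K] [AddCommGroup Γ] [AddCommGroup A] [Module K A]
    (𝒜 : Γ → Submodule K A) (ε : Γ → Γ → K)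
    (μ br : A →ₗ[K] A →ₗ[K] A) (α : A →ₗ[K] A)
    (hε : IsCommFactor ε) (hμ : GradedMul 𝒜 μ) (hbr : GradedMul 𝒜 br)
    (hα : GradedEnd 𝒜 α)
    (hcomm : IsEpsComm 𝒜 ε μ) (hassoc : IsHomAssoc 𝒜 μ α)
    (hLie : IsHomLie 𝒜 ε br α) (hLeib : TransposedLeibniz 𝒜 ε μ br α)
    (hmulα : ∀ x y : A, α (μ x y) = μ (α x) (α y))
    (hbrα : ∀ x y : A, α (br x y) = br (α x) (α y)) :
    ∀ ⦃γ₀ γ₁ γ₂ γ₃ : Γ⦄ ⦃h x y z : A⦄,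
      h ∈ 𝒜 γ₀ → x ∈ 𝒜 γ₁ → y ∈ 𝒜 γ₂ → z ∈ 𝒜 γ₃ →
      ε γ₃ γ₁ • br (μ (α h) (br x y)) (α (α z))
        + ε γ₁ γ₂ • br (μ (α h) (br y z)) (α (α x))
        + ε γ₂ γ₃ • br (μ (α h) (br z x)) (α (α y)) = 0 := by
  obtain ⟨-, h1, hr, hl⟩ := hε
  obtain ⟨hsk, hJ⟩ := hLie
  -- Jacobi identity with the inner bracket on the left
  have J : ∀ ⦃a b c : Γ⦄ ⦃x y z : A⦄, x ∈ 𝒜 a → y ∈ 𝒜 b → z ∈ 𝒜 c →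
      ε c a • br (br x y) (α z) + ε a b • br (br y z) (α x)
        + ε b c • br (br z x) (α y) = 0 := by
    have key : ∀ ⦃a b c : Γ⦄ ⦃x y z : A⦄, x ∈ 𝒜 a → y ∈ 𝒜 b → z ∈ 𝒜 c →
        ε c a • br (br x y) (α z) = -(ε b c • br (α z) (br x y)) := by
      intro a b c x y z hx hy hz
      rw [hsk (hα hz) (hbr hx hy), smul_neg, neg_neg, smul_smul, hr]
      congr 1
      linear_combination (-ε c a) * h1 b c
    intro a b c x y z hx hy hz
    rw [key hx hy hz, key hy hz hx, key hz hx hy]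
    have := hJ hx hy hz
    linear_combination (norm := module) (-1 : K) • this
  intro g a b c h x y z hh hx hy hz
  -- multiplied Jacobi identity for `h·x, α y, α z`
  have J2 : ∀ ⦃a b c : Γ⦄ ⦃x y z : A⦄, x ∈ 𝒜 a → y ∈ 𝒜 b → z ∈ 𝒜 c →
      ε c a • br (br (μ h x) (α y)) (α (α z))
        + (ε a b * (ε g b * ε g c)) • br (br (α y) (α z)) (μ (α h) (α x))
        + (ε b c * ε g c) • br (br (α z) (μ h x)) (α (α y)) = 0 := by
    intro a b c x y z hx hy hz
    have e := congrArg (fun v => ε g c • v) (J (hμ hh hx) (hα hy) (hα hz))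
    simp only [smul_add, smul_smul, smul_zero, hr, hl, hmulα] at e
    rw [← e]
    congr 1
    · congr 1
      · congr 1
        linear_combination (-ε c a) * h1 g c
      · congr 1
        ring
    · congr 1
      ring
  -- Leibniz applied to `h`, `x`, `y`
  have L1 : ∀ ⦃a b c : Γ⦄ ⦃x y z : A⦄, x ∈ 𝒜 a → y ∈ 𝒜 b → z ∈ 𝒜 c →
      (2 : K) • br (μ (α h) (br x y)) (α (α z))
        = br (br (μ h x) (α y)) (α (α z)) + ε g a • br (br (α x) (μ h y)) (α (α z)) := by
    intro a b c x y z hx hy hz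
    have e := congrArg (fun v => br v (α (α z))) (hLeib hx hy hh)
    simpa only [map_smul, map_add, LinearMap.smul_apply, LinearMap.add_apply] using e
  -- Leibniz applied to `α h`, `[x,y]`, `α z`
  have L2 : ∀ ⦃a b c : Γ⦄ ⦃x y z : A⦄, x ∈ 𝒜 a → y ∈ 𝒜 b → z ∈ 𝒜 c →
      (2 : K) • μ (α (α h)) (br (br x y) (α z))
        = br (μ (α h) (br x y)) (α (α z))
          + (ε g a * ε g b) • br (br (α x) (α y)) (μ (α h) (α z)) := by
    intro a b c x y z hx hy hz
    have e := hLeib (hbr hx hy) (hα hz) (hα hh)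
    rwa [hr, hbrα] at e
  have J0 := congrArg (fun v => (2 : K) • μ (α (α h)) v) (J hx hy hz)
  simp only [map_add, map_smul, map_zero, smul_zero, smul_add] at J0
  linear_combination (norm := module) (ε c a) • L1 hx hy hz + (ε a b) • L1 hy hz hx
    + (ε b c) • L1 hz hx hy + J2 hx hy hz + J2 hy hz hx + J2 hz hx hy
    + (ε c a) • L2 hx hy hz + (ε a b) • L2 hy hz hx + (ε b c) • L2 hz hx hy - J0
end

section
/- If (A, ·, ⋄, ε, α) is a Hom-Novikov-Poisson color Hom-algebra, then the bracket [x,y] = x⋄y − ε(x,y) y⋄x makes (A, ·, [·,·], ε, α) a transposed Hom-Poisson color Hom-algebra. -/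
open scoped TensorProduct

/-- the ε-commutator of the Novikov product of a Hom-Novikov-Poisson
color Hom-algebra yields a transposed Hom-Poisson color Hom-algebra. -/
theorem homNovikovPoisson_to_transposedHomPoisson
    {K Γ A : Type*} [Field K] [AddCommGroup Γ] [AddCommGroup A] [Module K A]
    (𝒜 : Γ → Submodule K A) (ε : Γ → Γ → K)
    (μ d : A →ₗ[K] A →ₗ[K] A) (α : A →ₗ[K] A)
    (hε : IsCommFactor ε) (hHNP : IsHNP 𝒜 ε μ d α) :
    (∀ ⦃γ₁ γ₂ : Γ⦄ ⦃x y : A⦄, x ∈ 𝒜 γ₁ → y ∈ 𝒜 γ₂ →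
        brkt ε d γ₁ γ₂ x y ∈ 𝒜 (γ₁ + γ₂)) ∧
    (∀ ⦃γ₁ γ₂ : Γ⦄ ⦃x y : A⦄, x ∈ 𝒜 γ₁ → y ∈ 𝒜 γ₂ →
        brkt ε d γ₁ γ₂ x y = -(ε γ₁ γ₂ • brkt ε d γ₂ γ₁ y x)) ∧
    (∀ ⦃γ₁ γ₂ γ₃ : Γ⦄ ⦃x y z : A⦄, x ∈ 𝒜 γ₁ → y ∈ 𝒜 γ₂ → z ∈ 𝒜 γ₃ →
        ε γ₃ γ₁ • brkt ε d γ₁ (γ₂ + γ₃) (α x) (brkt ε d γ₂ γ₃ y z)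
          + ε γ₁ γ₂ • brkt ε d γ₂ (γ₃ + γ₁) (α y) (brkt ε d γ₃ γ₁ z x)
          + ε γ₂ γ₃ • brkt ε d γ₃ (γ₁ + γ₂) (α z) (brkt ε d γ₁ γ₂ x y) = 0) ∧
    (∀ ⦃γ₁ γ₂ γ₃ : Γ⦄ ⦃x y z : A⦄, x ∈ 𝒜 γ₁ → y ∈ 𝒜 γ₂ → z ∈ 𝒜 γ₃ →
        (2 : K) • μ (α z) (brkt ε d γ₁ γ₂ x y)
          = brkt ε d (γ₃ + γ₁) γ₂ (μ z x) (α y)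
            + ε γ₃ γ₁ • brkt ε d γ₁ (γ₃ + γ₂) (α x) (μ z y)) := by
  obtain ⟨h0, hinv, hadd, hadd'⟩ := hε
  obtain ⟨gμ, gd, gα, hcomm, hassoc, ⟨hls, -⟩, hc1, hc2⟩ := hHNP
  have inv : ∀ a b, ε b a = (ε a b)⁻¹ := fun a b => eq_inv_of_mul_eq_one_right (hinv a b)
  refine ⟨?_, ?_, ?_, ?_⟩
  · intro a b x y hx hy
    refine Submodule.sub_mem _ (gd hx hy) (Submodule.smul_mem _ _ ?_)
    rw [add_comm]
    exact gd hy hx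
  · intro a b x y hx hy
    have := h0 a b
    simp only [brkt, inv a b]
    match_scalars <;> field_simp
  · intro a b c x y z hx hy hz
    have h1 := hls hx hy hz
    have h2 := hls hy hz hx
    have h3 := hls hz hx hy
    have n1 := h0 a b
    have n2 := h0 b c
    have n3 := h0 c a
    rw [sub_eq_iff_eq_add, ← sub_eq_iff_eq_add'] at h1 h2 h3
    simp only [brkt, hadd, map_sub, map_smul, LinearMap.sub_apply, LinearMap.smul_apply,
      ← h1, ← h2, ← h3, inv a b, inv b c, inv c a]
    match_scalars <;> field_simp <;> ring
  · intro a b c x y z hx hy hz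
    have e1 := hcomm (gα hz) (gd hx hy)
    have e2 := hcomm (gα hz) (gd hy hx)
    have e3 := hcomm hz hx
    have e4 := hcomm hz hy
    have e5 := hc1 hx hz hy
    have e6 := hc1 hy hz hx
    have e7 := hc2 hx hy hz
    have n1 := h0 a b
    have n2 := h0 b c
    have n3 := h0 c a
    rw [sub_eq_iff_eq_add, ← sub_eq_iff_eq_add'] at e7
    simp only [brkt, hadd, hadd', map_sub, map_smul, LinearMap.smul_apply,
      e1, e2, e3, e4, e5, e6, ← e7, inv a b, inv b c, inv c a]
    match_scalars <;> field_simp <;> ring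
end

section
/- A Hom-Novikov-Poisson color Hom-algebra (A, ·, ⋄, ε, α) is admissible (i.e., (A, ·, [·,·], ε, α) with [x,y] = x⋄y − ε(x,y)y⋄x is a Hom-Poisson color Hom-algebra) if and only if the left Hom-associator vanishes: (x·y)⋄α(z) = α(x)⋄(y·z) for all homogeneous x,y,z. -/
open scoped TensorProduct

section HNPAux

variable {K Γ A : Type*} [Field K] [AddCommGroup Γ] [AddCommGroup A] [Module K A]
  {𝒜 : Γ → Submodule K A} {ε : Γ → Γ → K} {μ d : A →ₗ[K] A →ₗ[K] A} {α : A →ₗ[K] A}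

/-- The Hom-Leibniz identity rewritten in terms of `(x·y)⋄α(z)` and its permutations. -/
theorem hnp_leibniz_iff (hε : IsCommFactor ε) (hHNP : IsHNP 𝒜 ε μ d α)
    {γ₁ γ₂ γ₃ : Γ} {x y z : A} (hx : x ∈ 𝒜 γ₁) (hy : y ∈ 𝒜 γ₂) (hz : z ∈ 𝒜 γ₃) :
    (brkt ε d γ₁ (γ₂ + γ₃) (α x) (μ y z)
          = ε γ₁ γ₂ • μ (α y) (brkt ε d γ₁ γ₃ x z)
            + ε (γ₁ + γ₂) γ₃ • μ (α z) (brkt ε d γ₁ γ₂ x y)) ↔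
    d (α x) (μ y z) = d (μ x y) (α z) + ε γ₂ γ₃ • d (μ x z) (α y)
      - (ε γ₁ γ₂ * ε γ₁ γ₃) • d (μ y z) (α x) := by
  obtain ⟨h0, hinv, hr, hl⟩ := hε
  obtain ⟨_, gd, ga, comm, -, -, c1, -⟩ := hHNP
  have e21 : ε γ₂ γ₁ = (ε γ₁ γ₂)⁻¹ := eq_inv_of_mul_eq_one_left (hinv _ _)
  have e31 : ε γ₃ γ₁ = (ε γ₁ γ₃)⁻¹ := eq_inv_of_mul_eq_one_left (hinv _ _)
  have e32 : ε γ₃ γ₂ = (ε γ₂ γ₃)⁻¹ := eq_inv_of_mul_eq_one_left (hinv _ _)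
  have ha := h0 γ₁ γ₂
  have hb := h0 γ₁ γ₃
  have hc := h0 γ₂ γ₃
  have k1 := c1 hx hy hz
  have k2 := c1 hx hz hy
  have k3 := c1 hy hz hx
  have k4 := c1 hz hy hx
  rw [comm hz hy, map_smul, LinearMap.smul_apply, k3] at k4
  have m1 := comm (ga hy) (gd hx hz)
  have m2 := comm (ga hy) (gd hz hx)
  have m3 := comm (ga hz) (gd hx hy)
  have m4 := comm (ga hz) (gd hy hx)
  simp only [hr, hl, e21, e31, e32] at k1 k2 k3 k4 m1 m2 m3 m4
  have k4' : μ (d z x) (α y)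
      = (ε γ₁ γ₂ * (ε γ₂ γ₃)⁻¹ * (ε γ₁ γ₃)⁻¹) • μ (d y x) (α z) := by
    have := congrArg (fun t => ε γ₁ γ₂ • t) k4
    simp only [smul_smul, mul_inv_cancel₀ ha, one_smul] at this
    rw [← this, mul_assoc]
  simp only [brkt, map_sub, map_smul, m1, m2, m3, m4, k1, k2, k3, k4', hr, hl]
  rw [← sub_eq_zero, ← sub_eq_zero (a := d (α x) (μ y z))]
  refine Eq.congr ?_ rfl
  match_scalars <;> field_simp <;> ring

/-- The second compatibility rewritten in the same terms. -/
theorem hnp_compat_aux (hε : IsCommFactor ε) (hHNP : IsHNP 𝒜 ε μ d α)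
    {γ₁ γ₂ γ₃ : Γ} {x y z : A} (hx : x ∈ 𝒜 γ₁) (hy : y ∈ 𝒜 γ₂) (hz : z ∈ 𝒜 γ₃) :
    d (α x) (μ y z) = ε γ₂ γ₃ • d (μ x z) (α y)
      - (ε γ₁ γ₂ * ε γ₁ γ₃) • d (μ y z) (α x) + ε γ₁ γ₂ • d (α y) (μ x z) := by
  obtain ⟨h0, hinv, hr, hl⟩ := hε
  obtain ⟨_, gd, ga, comm, -, -, c1, c2⟩ := hHNP
  have k2 := c1 hx hz hy
  have k3 := c1 hy hz hx
  have c := c2 hx hy hz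
  rw [k2, k3, smul_smul, smul_smul, mul_assoc, hinv, hinv, mul_one, one_smul]
  linear_combination (norm := module) (-1 : K) • c

end HNPAux

/-- a Hom-Novikov-Poisson color Hom-algebra is admissible (the
ε-commutator of `⋄` makes it a Hom-Poisson color Hom-algebra) iff the mixed left
Hom-associator vanishes. -/
theorem homNovikovPoisson_admissible_iff
    {K Γ A : Type*} [Field K] [AddCommGroup Γ] [AddCommGroup A] [Module K A]
    (𝒜 : Γ → Submodule K A) (ε : Γ → Γ → K)
    (μ d : A →ₗ[K] A →ₗ[K] A) (α : A →ₗ[K] A)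
    (hε : IsCommFactor ε) (hHNP : IsHNP 𝒜 ε μ d α) :
    ((∀ ⦃γ₁ γ₂ : Γ⦄ ⦃x y : A⦄, x ∈ 𝒜 γ₁ → y ∈ 𝒜 γ₂ →
        brkt ε d γ₁ γ₂ x y = -(ε γ₁ γ₂ • brkt ε d γ₂ γ₁ y x)) ∧
     (∀ ⦃γ₁ γ₂ γ₃ : Γ⦄ ⦃x y z : A⦄, x ∈ 𝒜 γ₁ → y ∈ 𝒜 γ₂ → z ∈ 𝒜 γ₃ →
        ε γ₃ γ₁ • brkt ε d γ₁ (γ₂ + γ₃) (α x) (brkt ε d γ₂ γ₃ y z)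
          + ε γ₁ γ₂ • brkt ε d γ₂ (γ₃ + γ₁) (α y) (brkt ε d γ₃ γ₁ z x)
          + ε γ₂ γ₃ • brkt ε d γ₃ (γ₁ + γ₂) (α z) (brkt ε d γ₁ γ₂ x y) = 0) ∧
     (∀ ⦃γ₁ γ₂ γ₃ : Γ⦄ ⦃x y z : A⦄, x ∈ 𝒜 γ₁ → y ∈ 𝒜 γ₂ → z ∈ 𝒜 γ₃ →
        brkt ε d γ₁ (γ₂ + γ₃) (α x) (μ y z)
          = ε γ₁ γ₂ • μ (α y) (brkt ε d γ₁ γ₃ x z)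
            + ε (γ₁ + γ₂) γ₃ • μ (α z) (brkt ε d γ₁ γ₂ x y)))
    ↔
    (∀ ⦃γ₁ γ₂ γ₃ : Γ⦄ ⦃x y z : A⦄, x ∈ 𝒜 γ₁ → y ∈ 𝒜 γ₂ → z ∈ 𝒜 γ₃ →
        d (μ x y) (α z) = d (α x) (μ y z)) := by
  have hε' := hε
  obtain ⟨h0, hinv, hr, hl⟩ := hε'
  have hH := hHNP
  obtain ⟨gm, gd, ga, comm, -, ⟨nov, -⟩, -, -⟩ := hH
  constructor
  · rintro ⟨-, -, leib⟩ γ₁ γ₂ γ₃ x y z hx hy hz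
    have q := (hnp_leibniz_iff hε hHNP hy hx hz).1 (leib hy hx hz)
    have c := hnp_compat_aux hε hHNP hx hy hz
    have e21 : ε γ₂ γ₁ = (ε γ₁ γ₂)⁻¹ := eq_inv_of_mul_eq_one_left (hinv _ _)
    have ha := h0 γ₁ γ₂
    rw [c, q, comm hy hx, map_smul, LinearMap.smul_apply, e21]
    match_scalars <;> field_simp <;> ring
  · intro H
    refine ⟨?_, ?_, ?_⟩
    · intro γ₁ γ₂ x y _ _
      simp only [brkt, smul_sub, smul_smul, hinv, one_smul]
      abel
    · intro γ₁ γ₂ γ₃ x y z hx hy hz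
      have e21 : ε γ₂ γ₁ = (ε γ₁ γ₂)⁻¹ := eq_inv_of_mul_eq_one_left (hinv _ _)
      have e31 : ε γ₃ γ₁ = (ε γ₁ γ₃)⁻¹ := eq_inv_of_mul_eq_one_left (hinv _ _)
      have e32 : ε γ₃ γ₂ = (ε γ₂ γ₃)⁻¹ := eq_inv_of_mul_eq_one_left (hinv _ _)
      have ha := h0 γ₁ γ₂
      have hb := h0 γ₁ γ₃
      have hc := h0 γ₂ γ₃
      have n1 := sub_eq_iff_eq_add.1 (nov hx hy hz)
      have n2 := sub_eq_iff_eq_add.1 (nov hy hz hx)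
      have n3 := sub_eq_iff_eq_add.1 (nov hz hx hy)
      simp only [brkt, map_sub, map_smul, LinearMap.sub_apply, LinearMap.smul_apply, hr,
        n1, n2, n3, e21, e31, e32]
      match_scalars <;> field_simp <;> ring
    · intro γ₁ γ₂ γ₃ x y z hx hy hz
      rw [hnp_leibniz_iff hε hHNP hx hy hz]
      have c := hnp_compat_aux hε hHNP hx hy hz
      have q := H hy hx hz
      rw [comm hy hx, map_smul, LinearMap.smul_apply] at q
      rw [← q, smul_smul, hinv, one_smul] at c
      rw [c]
      abel
end

section
/- If (A, ·, ⋄, ε) is an admissible Novikov-Poisson color algebra and α: A → A is a morphism, then the Yau twist (A, ·_α, ⋄_α, ε, α), with x ·_α y = α(x·y) and x ⋄_α y = α(x⋄y), is an admissible Hom-Novikov-Poisson color Hom-algebra. -/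
open scoped TensorProduct

/-- the Yau twist of an admissible Novikov-Poisson color algebra
along a morphism `α` is an admissible Hom-Novikov-Poisson color Hom-algebra. -/
theorem yauTwist_admissibleNovikovPoisson
    {K Γ A : Type*} [Field K] [AddCommGroup Γ] [AddCommGroup A] [Module K A]
    (𝒜 : Γ → Submodule K A) (ε : Γ → Γ → K)
    (μ d : A →ₗ[K] A →ₗ[K] A) (α : A →ₗ[K] A)
    (hε : IsCommFactor ε)
    (hNP : IsAdmissibleHNP 𝒜 ε μ d (LinearMap.id))
    (hα : GradedEnd 𝒜 α)
    (hmorμ : ∀ x y : A, α (μ x y) = μ (α x) (α y))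
    (hmord : ∀ x y : A, α (d x y) = d (α x) (α y)) :
    IsAdmissibleHNP 𝒜 ε (twistMul α μ) (twistMul α d) α := by
  have tw : ∀ (ν : A →ₗ[K] A →ₗ[K] A) (x y : A), twistMul α ν x y = α (ν x y) :=
    fun _ _ _ => rfl
  obtain ⟨⟨gμ, gd, -, hc, ha, ⟨hn1, hn2⟩, ⟨hp1, hp2⟩⟩, hadm⟩ := hNP
  simp only [IsHomAssoc, LinearMap.id_apply] at ha hn1 hn2 hp1 hp2 hadm
  refine ⟨⟨?_, ?_, hα, ?_, ?_, ⟨?_, ?_⟩, ⟨?_, ?_⟩⟩, ?_⟩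
  · intro γ₁ γ₂ x y hx hy
    exact hα (gμ hx hy)
  · intro γ₁ γ₂ x y hx hy
    exact hα (gd hx hy)
  · intro γ₁ γ₂ x y hx hy
    rw [tw, tw, hc hx hy, map_smul]
  · intro γ₁ γ₂ γ₃ x y z hx hy hz
    simp only [tw, ← hmorμ]
    rw [ha hx hy hz]
  · intro γ₁ γ₂ γ₃ x y z hx hy hz
    simp only [tw, ← hmord, ← map_sub, ← map_smul]
    rw [hn1 hx hy hz]
  · intro γ₁ γ₂ γ₃ x y z hx hy hz
    simp only [tw, ← hmord]
    rw [hn2 hx hy hz, map_smul, map_smul]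
  · intro γ₁ γ₂ γ₃ x y z hx hy hz
    simp only [tw, ← hmorμ, ← hmord]
    rw [hp1 hx hy hz, map_smul, map_smul]
  · intro γ₁ γ₂ γ₃ x y z hx hy hz
    simp only [tw, ← hmorμ, ← hmord, ← map_sub, ← map_smul]
    rw [hp2 hx hy hz]
  · intro γ₁ γ₂ γ₃ x y z hx hy hz
    simp only [tw, ← hmorμ, ← hmord]
    rw [hadm hx hy hz]
end

section
/- Let (A₁, ·₁, ⋄₁, ε, α₁) and (A₂, ·₂, ⋄₂, ε, α₂) be admissible Hom-Novikov-Poisson color Hom-algebras graded by the same group Γ with commutation factor ε. Then A₁ ⊗ A₂ with α = α₁⊗α₂, product (x₁⊗x₂)·(y₁⊗y₂) = ε(x₂,y₁)(x₁·₁y₁)⊗(x₂·₂y₂), and product (x₁⊗x₂)⋄(y₁⊗y₂) = ε(x₂,y₁)((x₁⋄₁y₁)⊗(x₂·₂y₂) + (x₁·₁y₁)⊗(x₂⋄₂y₂)) is an admissible Hom-Novikov-Poisson color Hom-algebra, where x₁⊗x₂ has degree deg(x₁)+deg(x₂). -/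
open scoped TensorProduct

section TensorHNP

variable {K Γ A₁ A₂ : Type*} [Field K] [AddCommGroup Γ]
variable [AddCommGroup A₁] [Module K A₁] [AddCommGroup A₂] [Module K A₂]

/-- The dot product of homogeneous pure tensors: here `δ₁` is the degree of the
second component of the left factor and `δ₂` the degree of the first component of
the right factor. -/
noncomputable def tDot (ε : Γ → Γ → K) (μ₁ : A₁ →ₗ[K] A₁ →ₗ[K] A₁)
    (μ₂ : A₂ →ₗ[K] A₂ →ₗ[K] A₂) (δ₁ δ₂ : Γ) (x₁ : A₁) (x₂ : A₂) (y₁ : A₁) (y₂ : A₂) :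
    A₁ ⊗[K] A₂ :=
  ε δ₁ δ₂ • (μ₁ x₁ y₁ ⊗ₜ[K] μ₂ x₂ y₂)

/-- The diamond product of homogeneous pure tensors. -/
noncomputable def tDiam (ε : Γ → Γ → K) (μ₁ d₁ : A₁ →ₗ[K] A₁ →ₗ[K] A₁)
    (μ₂ d₂ : A₂ →ₗ[K] A₂ →ₗ[K] A₂) (δ₁ δ₂ : Γ) (x₁ : A₁) (x₂ : A₂) (y₁ : A₁) (y₂ : A₂) :
    A₁ ⊗[K] A₂ :=
  ε δ₁ δ₂ • ((d₁ x₁ y₁) ⊗ₜ[K] (μ₂ x₂ y₂) + (μ₁ x₁ y₁) ⊗ₜ[K] (d₂ x₂ y₂))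

/-- Grading of the tensor product: the degree-`γ` part is spanned by the pure
tensors `x₁ ⊗ x₂` with `x₁`, `x₂` homogeneous of degrees summing to `γ`. -/
noncomputable def tGrading (𝒜₁ : Γ → Submodule K A₁) (𝒜₂ : Γ → Submodule K A₂)
    (γ : Γ) : Submodule K (A₁ ⊗[K] A₂) :=
  Submodule.span K {t | ∃ (γ₁ γ₂ : Γ) (x₁ : A₁) (x₂ : A₂),
    γ₁ + γ₂ = γ ∧ x₁ ∈ 𝒜₁ γ₁ ∧ x₂ ∈ 𝒜₂ γ₂ ∧ t = x₁ ⊗ₜ[K] x₂}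

set_option linter.all false

/-- In an admissible algebra all mixed triple products reduce to two normal forms, and these are
ε-symmetric. -/
theorem adm_aux {K Γ A : Type*} [Field K] [AddCommGroup Γ] [AddCommGroup A] [Module K A]
    {𝒜 : Γ → Submodule K A} {ε : Γ → Γ → K} {μ d : A →ₗ[K] A →ₗ[K] A} {α : A →ₗ[K] A}
    (hε : IsCommFactor ε) (h : IsAdmissibleHNP 𝒜 ε μ d α)
    {a b c : Γ} {x y z : A} (hx : x ∈ 𝒜 a) (hy : y ∈ 𝒜 b) (hz : z ∈ 𝒜 c) :
    μ (α x) (μ y z) = μ (μ x y) (α z) ∧ d (α x) (μ y z) = d (μ x y) (α z) ∧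
    μ (d x y) (α z) = d (μ x y) (α z) ∧ μ (α x) (d y z) = d (μ x y) (α z) ∧
    μ (μ y x) (α z) = ε b a • μ (μ x y) (α z) ∧ d (μ y x) (α z) = ε b a • d (μ x y) (α z) ∧
    μ (μ x z) (α y) = ε c b • μ (μ x y) (α z) ∧ d (μ x z) (α y) = ε c b • d (μ x y) (α z) := by
  obtain ⟨⟨hgm, hgd, hga, hc, has, hn, hp1, hp2⟩, had⟩ := h
  obtain ⟨-, hinv, hadd, -⟩ := hε
  -- swapping the last two arguments
  have sw : ∀ ⦃a b c : Γ⦄ ⦃x y z : A⦄, x ∈ 𝒜 a → y ∈ 𝒜 b → z ∈ 𝒜 c →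
      d (μ x z) (α y) = ε c b • d (μ x y) (α z) := by
    intro a b c x y z hx hy hz
    rw [had hx hz hy, had hx hy hz, hc hz hy, map_smul]
  have sw' : ∀ ⦃a b c : Γ⦄ ⦃x y z : A⦄, x ∈ 𝒜 a → y ∈ 𝒜 b → z ∈ 𝒜 c →
      d (μ y x) (α z) = ε b a • d (μ x y) (α z) := by
    intro a b c x y z hx hy hz
    rw [hc hy hx, map_smul, LinearMap.smul_apply]
  have md : ∀ ⦃a b c : Γ⦄ ⦃x y z : A⦄, x ∈ 𝒜 a → y ∈ 𝒜 b → z ∈ 𝒜 c →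
      μ (d x y) (α z) = d (μ x y) (α z) := by
    intro a b c x y z hx hy hz
    have h1 := hp1 hx hz hy
    rw [sw hx hy hz] at h1
    have h2 := congrArg (fun t => ε b c • t) h1
    simp only [smul_smul, hinv, one_smul] at h2
    exact h2.symm
  refine ⟨(has hx hy hz).symm, (had hx hy hz).symm, md hx hy hz, ?_, ?_, sw' hx hy hz, ?_,
    sw hx hy hz⟩
  · rw [hc (hga hx) (hgd hy hz), md hy hz hx, sw hy hx hz, sw' hx hy hz, smul_smul, smul_smul,
      hadd]
    try rw [← mul_assoc]
    rw [show ε a b * ε a c * ε c a * ε b a = 1 by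
      linear_combination ε a b * ε b a * hinv a c + hinv a b, one_smul]
  · rw [hc hy hx, map_smul, LinearMap.smul_apply]
  · rw [has hx hz hy, has hx hy hz, hc hz hy, map_smul]

/-- the tensor product of two admissible Hom-Novikov-Poisson color
Hom-algebras is an admissible Hom-Novikov-Poisson color Hom-algebra (the axioms
are verified on homogeneous pure tensors, with `deg (x₁ ⊗ x₂) = deg x₁ + deg x₂`). -/
theorem tensorProduct_admissibleHNP
    (𝒜₁ : Γ → Submodule K A₁) (𝒜₂ : Γ → Submodule K A₂) (ε : Γ → Γ → K)
    (μ₁ d₁ : A₁ →ₗ[K] A₁ →ₗ[K] A₁) (α₁ : A₁ →ₗ[K] A₁)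
    (μ₂ d₂ : A₂ →ₗ[K] A₂ →ₗ[K] A₂) (α₂ : A₂ →ₗ[K] A₂)
    (hε : IsCommFactor ε)
    (h₁ : IsAdmissibleHNP 𝒜₁ ε μ₁ d₁ α₁) (h₂ : IsAdmissibleHNP 𝒜₂ ε μ₂ d₂ α₂) :
    ∀ ⦃a₁ a₂ b₁ b₂ c₁ c₂ : Γ⦄ ⦃x₁ y₁ z₁ : A₁⦄ ⦃x₂ y₂ z₂ : A₂⦄,
      x₁ ∈ 𝒜₁ a₁ → x₂ ∈ 𝒜₂ a₂ → y₁ ∈ 𝒜₁ b₁ → y₂ ∈ 𝒜₂ b₂ → z₁ ∈ 𝒜₁ c₁ → z₂ ∈ 𝒜₂ c₂ →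
      -- the products are even
      (tDot ε μ₁ μ₂ a₂ b₁ x₁ x₂ y₁ y₂ ∈ tGrading 𝒜₁ 𝒜₂ ((a₁ + a₂) + (b₁ + b₂))) ∧
      (tDiam ε μ₁ d₁ μ₂ d₂ a₂ b₁ x₁ x₂ y₁ y₂ ∈ tGrading 𝒜₁ 𝒜₂ ((a₁ + a₂) + (b₁ + b₂))) ∧
      -- ε-commutativity of the dot product
      (tDot ε μ₁ μ₂ a₂ b₁ x₁ x₂ y₁ y₂
        = ε (a₁ + a₂) (b₁ + b₂) • tDot ε μ₁ μ₂ b₂ a₁ y₁ y₂ x₁ x₂) ∧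
      -- Hom-associativity of the dot product
      (ε a₂ b₁ • tDot ε μ₁ μ₂ (a₂ + b₂) c₁ (μ₁ x₁ y₁) (μ₂ x₂ y₂) (α₁ z₁) (α₂ z₂)
        = ε b₂ c₁ • tDot ε μ₁ μ₂ a₂ (b₁ + c₁) (α₁ x₁) (α₂ x₂) (μ₁ y₁ z₁) (μ₂ y₂ z₂)) ∧
      -- first Hom-Novikov identity for the diamond product
      (ε a₂ b₁ • (tDiam ε μ₁ d₁ μ₂ d₂ (a₂ + b₂) c₁ (d₁ x₁ y₁) (μ₂ x₂ y₂) (α₁ z₁) (α₂ z₂)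
            + tDiam ε μ₁ d₁ μ₂ d₂ (a₂ + b₂) c₁ (μ₁ x₁ y₁) (d₂ x₂ y₂) (α₁ z₁) (α₂ z₂))
          - ε b₂ c₁ • (tDiam ε μ₁ d₁ μ₂ d₂ a₂ (b₁ + c₁) (α₁ x₁) (α₂ x₂) (d₁ y₁ z₁) (μ₂ y₂ z₂)
            + tDiam ε μ₁ d₁ μ₂ d₂ a₂ (b₁ + c₁) (α₁ x₁) (α₂ x₂) (μ₁ y₁ z₁) (d₂ y₂ z₂))
        = ε (a₁ + a₂) (b₁ + b₂) •
          (ε b₂ a₁ • (tDiam ε μ₁ d₁ μ₂ d₂ (b₂ + a₂) c₁ (d₁ y₁ x₁) (μ₂ y₂ x₂) (α₁ z₁) (α₂ z₂)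
              + tDiam ε μ₁ d₁ μ₂ d₂ (b₂ + a₂) c₁ (μ₁ y₁ x₁) (d₂ y₂ x₂) (α₁ z₁) (α₂ z₂))
            - ε a₂ c₁ • (tDiam ε μ₁ d₁ μ₂ d₂ b₂ (a₁ + c₁) (α₁ y₁) (α₂ y₂) (d₁ x₁ z₁) (μ₂ x₂ z₂)
              + tDiam ε μ₁ d₁ μ₂ d₂ b₂ (a₁ + c₁) (α₁ y₁) (α₂ y₂) (μ₁ x₁ z₁) (d₂ x₂ z₂)))) ∧
      -- second Hom-Novikov identity for the diamond product
      (ε a₂ b₁ • (tDiam ε μ₁ d₁ μ₂ d₂ (a₂ + b₂) c₁ (d₁ x₁ y₁) (μ₂ x₂ y₂) (α₁ z₁) (α₂ z₂)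
            + tDiam ε μ₁ d₁ μ₂ d₂ (a₂ + b₂) c₁ (μ₁ x₁ y₁) (d₂ x₂ y₂) (α₁ z₁) (α₂ z₂))
        = ε (b₁ + b₂) (c₁ + c₂) •
          (ε a₂ c₁ • (tDiam ε μ₁ d₁ μ₂ d₂ (a₂ + c₂) b₁ (d₁ x₁ z₁) (μ₂ x₂ z₂) (α₁ y₁) (α₂ y₂)
            + tDiam ε μ₁ d₁ μ₂ d₂ (a₂ + c₂) b₁ (μ₁ x₁ z₁) (d₂ x₂ z₂) (α₁ y₁) (α₂ y₂)))) ∧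
      -- first compatibility: (X·Y)⋄α(Z) = ε(Y,Z) (X⋄Z)·α(Y)
      (ε a₂ b₁ • tDiam ε μ₁ d₁ μ₂ d₂ (a₂ + b₂) c₁ (μ₁ x₁ y₁) (μ₂ x₂ y₂) (α₁ z₁) (α₂ z₂)
        = ε (b₁ + b₂) (c₁ + c₂) •
          (ε a₂ c₁ • (tDot ε μ₁ μ₂ (a₂ + c₂) b₁ (d₁ x₁ z₁) (μ₂ x₂ z₂) (α₁ y₁) (α₂ y₂)
            + tDot ε μ₁ μ₂ (a₂ + c₂) b₁ (μ₁ x₁ z₁) (d₂ x₂ z₂) (α₁ y₁) (α₂ y₂)))) ∧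
      -- second compatibility
      (ε a₂ b₁ • (tDot ε μ₁ μ₂ (a₂ + b₂) c₁ (d₁ x₁ y₁) (μ₂ x₂ y₂) (α₁ z₁) (α₂ z₂)
            + tDot ε μ₁ μ₂ (a₂ + b₂) c₁ (μ₁ x₁ y₁) (d₂ x₂ y₂) (α₁ z₁) (α₂ z₂))
          - ε b₂ c₁ • tDiam ε μ₁ d₁ μ₂ d₂ a₂ (b₁ + c₁) (α₁ x₁) (α₂ x₂) (μ₁ y₁ z₁) (μ₂ y₂ z₂)
        = ε (a₁ + a₂) (b₁ + b₂) •
          (ε b₂ a₁ • (tDot ε μ₁ μ₂ (b₂ + a₂) c₁ (d₁ y₁ x₁) (μ₂ y₂ x₂) (α₁ z₁) (α₂ z₂)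
              + tDot ε μ₁ μ₂ (b₂ + a₂) c₁ (μ₁ y₁ x₁) (d₂ y₂ x₂) (α₁ z₁) (α₂ z₂))
            - ε a₂ c₁ •
              tDiam ε μ₁ d₁ μ₂ d₂ b₂ (a₁ + c₁) (α₁ y₁) (α₂ y₂) (μ₁ x₁ z₁) (μ₂ x₂ z₂))) ∧
      -- admissibility: (X·Y)⋄α(Z) = α(X)⋄(Y·Z)
      (ε a₂ b₁ • tDiam ε μ₁ d₁ μ₂ d₂ (a₂ + b₂) c₁ (μ₁ x₁ y₁) (μ₂ x₂ y₂) (α₁ z₁) (α₂ z₂)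
        = ε b₂ c₁ •
          tDiam ε μ₁ d₁ μ₂ d₂ a₂ (b₁ + c₁) (α₁ x₁) (α₂ x₂) (μ₁ y₁ z₁) (μ₂ y₂ z₂)) := by
  intro a₁ a₂ b₁ b₂ c₁ c₂ x₁ y₁ z₁ x₂ y₂ z₂ hx₁ hx₂ hy₁ hy₂ hz₁ hz₂
  obtain ⟨p1, p2, p3, p4, p5, p6, p7, p8⟩ := adm_aux hε h₁ hx₁ hy₁ hz₁
  obtain ⟨q1, q2, q3, q4, -, -, -, -⟩ := adm_aux hε h₁ hy₁ hx₁ hz₁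
  obtain ⟨-, -, r3, -, -, -, -, -⟩ := adm_aux hε h₁ hx₁ hz₁ hy₁
  obtain ⟨P1, P2, P3, P4, P5, P6, P7, P8⟩ := adm_aux hε h₂ hx₂ hy₂ hz₂
  obtain ⟨Q1, Q2, Q3, Q4, -, -, -, -⟩ := adm_aux hε h₂ hy₂ hx₂ hz₂
  obtain ⟨-, -, R3, -, -, -, -, -⟩ := adm_aux hε h₂ hx₂ hz₂ hy₂
  obtain ⟨⟨gm₁, gd₁, ga₁, hc₁, has₁, ⟨n₁, n₁'⟩, -⟩, -⟩ := h₁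
  obtain ⟨⟨gm₂, gd₂, ga₂, hc₂, has₂, ⟨n₂, n₂'⟩, -⟩, -⟩ := h₂
  obtain ⟨hne, hinv, hadd, hadd'⟩ := hε
  have iv : ∀ u v, ε u v = (ε v u)⁻¹ := fun u v => eq_inv_of_mul_eq_one_left (hinv u v)
  have N₁ := sub_eq_iff_eq_add.mp (n₁ hx₁ hy₁ hz₁)
  have N₂ := sub_eq_iff_eq_add.mp (n₂ hx₂ hy₂ hz₂)
  have N₁' := n₁' hx₁ hy₁ hz₁
  have N₂' := n₂' hx₂ hy₂ hz₂
  have e1 := hne a₁ b₁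
  have e2 := hne a₁ b₂
  have e3 := hne a₂ b₁
  have e4 := hne a₂ b₂
  have e5 := hne b₁ c₁
  have e6 := hne b₁ c₂
  have e7 := hne b₂ c₁
  have e8 := hne b₂ c₂
  have e9 := hne a₂ c₁
  have mem : ∀ {u v w : Γ} {s : A₁} {t : A₂}, s ∈ 𝒜₁ u → t ∈ 𝒜₂ v → u + v = w →
      s ⊗ₜ[K] t ∈ tGrading 𝒜₁ 𝒜₂ w := fun hs ht hw =>
    Submodule.subset_span ⟨_, _, _, _, hw, hs, ht, rfl⟩
  have deg : (a₁ + b₁) + (a₂ + b₂) = (a₁ + a₂) + (b₁ + b₂) := by abel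
  refine ⟨?_, ?_, ?_, ?_, ?_, ?_, ?_, ?_, ?_⟩
  · exact Submodule.smul_mem _ _ (mem (gm₁ hx₁ hy₁) (gm₂ hx₂ hy₂) deg)
  · exact Submodule.smul_mem _ _ (Submodule.add_mem _
      (mem (gd₁ hx₁ hy₁) (gm₂ hx₂ hy₂) deg) (mem (gm₁ hx₁ hy₁) (gd₂ hx₂ hy₂) deg))
  · simp only [tDot]
    rw [hc₁ hx₁ hy₁, hc₂ hx₂ hy₂]
    simp only [hadd, hadd', iv b₂ a₁, TensorProduct.tmul_smul, ← TensorProduct.smul_tmul']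
    match_scalars
    field_simp
  · simp only [tDot, tDiam, p1, p2, p3, p4, q1, q2, q3, q4, r3, P1, P2, P3, P4, Q1, Q2, Q3, Q4, R3]
    try simp only [p5, p6, p7, p8, P5, P6, P7, P8]
    simp only [hadd, hadd', iv b₁ a₁, iv b₂ a₁, iv b₁ a₂, iv b₂ a₂, iv c₁ b₁, iv c₁ b₂, iv c₂ b₁,
      iv c₂ b₂, TensorProduct.tmul_smul, ← TensorProduct.smul_tmul', TensorProduct.tmul_add,
      TensorProduct.add_tmul, TensorProduct.tmul_sub, TensorProduct.sub_tmul]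
    match_scalars <;> field_simp <;> ring
  · simp only [tDot, tDiam, p1, p2, p3, p4, q1, q2, q3, q4, r3, P1, P2, P3, P4, Q1, Q2, Q3, Q4, R3]
    try simp only [p5, p6, p7, p8, P5, P6, P7, P8, N₁, N₂]
    simp only [hadd, hadd', iv b₁ a₁, iv b₂ a₁, iv b₁ a₂, iv b₂ a₂, iv c₁ b₁, iv c₁ b₂, iv c₂ b₁,
      iv c₂ b₂, TensorProduct.tmul_smul, ← TensorProduct.smul_tmul', TensorProduct.tmul_add,
      TensorProduct.add_tmul, TensorProduct.tmul_sub, TensorProduct.sub_tmul]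
    match_scalars <;> field_simp <;> ring
  · simp only [tDot, tDiam, p1, p2, p3, p4, q1, q2, q3, q4, r3, P1, P2, P3, P4, Q1, Q2, Q3, Q4, R3]
    try simp only [p5, p6, p7, p8, P5, P6, P7, P8, N₁', N₂']
    simp only [hadd, hadd', iv b₁ a₁, iv b₂ a₁, iv b₁ a₂, iv b₂ a₂, iv c₁ b₁, iv c₁ b₂, iv c₂ b₁,
      iv c₂ b₂, TensorProduct.tmul_smul, ← TensorProduct.smul_tmul', TensorProduct.tmul_add,
      TensorProduct.add_tmul, TensorProduct.tmul_sub, TensorProduct.sub_tmul]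
    match_scalars <;> field_simp <;> ring
  · simp only [tDot, tDiam, p1, p2, p3, p4, q1, q2, q3, q4, r3, P1, P2, P3, P4, Q1, Q2, Q3, Q4, R3]
    try simp only [p5, p6, p7, p8, P5, P6, P7, P8]
    simp only [hadd, hadd', iv b₁ a₁, iv b₂ a₁, iv b₁ a₂, iv b₂ a₂, iv c₁ b₁, iv c₁ b₂, iv c₂ b₁,
      iv c₂ b₂, TensorProduct.tmul_smul, ← TensorProduct.smul_tmul', TensorProduct.tmul_add,
      TensorProduct.add_tmul, TensorProduct.tmul_sub, TensorProduct.sub_tmul]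
    match_scalars <;> field_simp <;> ring
  · simp only [tDot, tDiam, p1, p2, p3, p4, q1, q2, q3, q4, r3, P1, P2, P3, P4, Q1, Q2, Q3, Q4, R3]
    try simp only [p5, p6, p7, p8, P5, P6, P7, P8]
    simp only [hadd, hadd', iv b₁ a₁, iv b₂ a₁, iv b₁ a₂, iv b₂ a₂, iv c₁ b₁, iv c₁ b₂, iv c₂ b₁,
      iv c₂ b₂, TensorProduct.tmul_smul, ← TensorProduct.smul_tmul', TensorProduct.tmul_add,
      TensorProduct.add_tmul, TensorProduct.tmul_sub, TensorProduct.sub_tmul]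
    match_scalars <;> field_simp <;> ring
  · simp only [tDot, tDiam, p1, p2, p3, p4, q1, q2, q3, q4, r3, P1, P2, P3, P4, Q1, Q2, Q3, Q4, R3]
    try simp only [p5, p6, p7, p8, P5, P6, P7, P8]
    simp only [hadd, hadd', iv b₁ a₁, iv b₂ a₁, iv b₁ a₂, iv b₂ a₂, iv c₁ b₁, iv c₁ b₂, iv c₂ b₁,
      iv c₂ b₂, TensorProduct.tmul_smul, ← TensorProduct.smul_tmul', TensorProduct.tmul_add,
      TensorProduct.add_tmul, TensorProduct.tmul_sub, TensorProduct.sub_tmul]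
    match_scalars <;> field_simp <;> ring

end TensorHNP
end

section
/- If (A, ·, ε, α) is a Hom-Novikov color Hom-algebra, then (A, ·, [·,·], ε, α) with [x,y] = x·y − ε(x,y)y·x is a Hom-Gelfand-Dorfman color Hom-algebra. -/
open scoped TensorProduct

/-- a Hom-Novikov color Hom-algebra with its ε-commutator bracket is a
Hom-Gelfand-Dorfman color Hom-algebra. -/
theorem homNovikov_to_homGelfandDorfman
    {K Γ A : Type*} [Field K] [AddCommGroup Γ] [AddCommGroup A] [Module K A]
    (𝒜 : Γ → Submodule K A) (ε : Γ → Γ → K)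
    (μ : A →ₗ[K] A →ₗ[K] A) (α : A →ₗ[K] A)
    (hε : IsCommFactor ε) (hμ : GradedMul 𝒜 μ) (hα : GradedEnd 𝒜 α)
    (hNov : IsHomNovikov 𝒜 ε μ α) :
    (∀ ⦃γ₁ γ₂ : Γ⦄ ⦃x y : A⦄, x ∈ 𝒜 γ₁ → y ∈ 𝒜 γ₂ →
        brkt ε μ γ₁ γ₂ x y ∈ 𝒜 (γ₁ + γ₂)) ∧
    (∀ ⦃γ₁ γ₂ : Γ⦄ ⦃x y : A⦄, x ∈ 𝒜 γ₁ → y ∈ 𝒜 γ₂ →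
        brkt ε μ γ₁ γ₂ x y = -(ε γ₁ γ₂ • brkt ε μ γ₂ γ₁ y x)) ∧
    (∀ ⦃γ₁ γ₂ γ₃ : Γ⦄ ⦃x y z : A⦄, x ∈ 𝒜 γ₁ → y ∈ 𝒜 γ₂ → z ∈ 𝒜 γ₃ →
        ε γ₃ γ₁ • brkt ε μ γ₁ (γ₂ + γ₃) (α x) (brkt ε μ γ₂ γ₃ y z)
          + ε γ₁ γ₂ • brkt ε μ γ₂ (γ₃ + γ₁) (α y) (brkt ε μ γ₃ γ₁ z x)
          + ε γ₂ γ₃ • brkt ε μ γ₃ (γ₁ + γ₂) (α z) (brkt ε μ γ₁ γ₂ x y) = 0) ∧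
    (∀ ⦃γ₁ γ₂ γ₃ : Γ⦄ ⦃x y z : A⦄, x ∈ 𝒜 γ₁ → y ∈ 𝒜 γ₂ → z ∈ 𝒜 γ₃ →
        μ (α y) (brkt ε μ γ₁ γ₃ x z)
          = ε γ₂ γ₁ • brkt ε μ γ₁ (γ₂ + γ₃) (α x) (μ y z)
            - ε (γ₁ + γ₂) γ₃ • brkt ε μ γ₃ (γ₂ + γ₁) (α z) (μ y x)
            + μ (brkt ε μ γ₂ γ₁ y x) (α z)
            - ε γ₁ γ₃ • μ (brkt ε μ γ₂ γ₃ y z) (α x)) := by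
  obtain ⟨h0, hs, hr, hl⟩ := hε
  obtain ⟨n1, n2⟩ := hNov
  have hinv : ∀ a b, ε b a = (ε a b)⁻¹ := fun a b => eq_inv_of_mul_eq_one_right (hs a b)
  refine ⟨?_, ?_, ?_, ?_⟩
  · intro γ₁ γ₂ x y hx hy
    refine Submodule.sub_mem _ (hμ hx hy) (Submodule.smul_mem _ _ ?_)
    rw [add_comm]
    exact hμ hy hx
  · intro γ₁ γ₂ x y hx hy
    simp only [brkt, smul_sub, smul_smul, hs, one_smul]
    abel
  · intro γ₁ γ₂ γ₃ x y z hx hy hz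
    have e1 := n1 hx hy hz
    have e2 := n1 hy hz hx
    have e3 := n1 hz hx hy
    have a0 := h0 γ₁ γ₂
    have b0 := h0 γ₂ γ₃
    have c0 := h0 γ₁ γ₃
    simp only [brkt, hr, hl, map_sub, map_smul, LinearMap.sub_apply, LinearMap.smul_apply]
    rw [hinv γ₁ γ₃] at *
    rw [hinv γ₁ γ₂, hinv γ₂ γ₃]
    linear_combination (norm := skip) (-(ε γ₁ γ₃)⁻¹) • e1 - ε γ₁ γ₂ • e2 - ε γ₂ γ₃ • e3
    match_scalars <;> field_simp <;> ring
  · intro γ₁ γ₂ γ₃ x y z hx hy hz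
    have e1 := n1 hx hy hz
    have e2 := n1 hz hy hx
    have e3 := n2 hy hx hz
    have a0 := h0 γ₁ γ₂
    have b0 := h0 γ₂ γ₃
    have c0 := h0 γ₁ γ₃
    simp only [brkt, hr, hl, map_sub, map_smul, LinearMap.sub_apply, LinearMap.smul_apply]
    rw [hinv γ₂ γ₃] at e2
    rw [hinv γ₁ γ₃, hinv γ₁ γ₂, hinv γ₂ γ₃]
    linear_combination (norm := skip) (ε γ₁ γ₂)⁻¹ • e1 - (ε γ₁ γ₃ * ε γ₂ γ₃) • e2 - e3
    match_scalars <;> field_simp <;> ring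
end

section
/- Let (A, ·, [·,·], ε, α) be a Hom-Poisson color Hom-algebra with an even derivation D (a derivation for both · and [·,·]) commuting with α. Define x ⋄ y = x·D(y). Then (A, ⋄, [·,·], ε, α) is a Hom-Gelfand-Dorfman color Hom-algebra. -/
open scoped TensorProduct

/-- a Hom-Poisson color Hom-algebra with an even derivation `D` of
both products, commuting with `α`, yields a Hom-Gelfand-Dorfman color Hom-algebra
with the product `x ⋄ y = x · D(y)`. -/
theorem homPoisson_derivation_to_homGelfandDorfman
    {K Γ A : Type*} [Field K] [AddCommGroup Γ] [AddCommGroup A] [Module K A]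
    (𝒜 : Γ → Submodule K A) (ε : Γ → Γ → K)
    (μ br : A →ₗ[K] A →ₗ[K] A) (α D : A →ₗ[K] A)
    (hε : IsCommFactor ε) (hμ : GradedMul 𝒜 μ) (hbr : GradedMul 𝒜 br)
    (hα : GradedEnd 𝒜 α)
    (hcomm : IsEpsComm 𝒜 ε μ) (hassoc : IsHomAssoc 𝒜 μ α)
    (hLie : IsHomLie 𝒜 ε br α)
    (hLeibniz : ∀ ⦃γ₁ γ₂ γ₃ : Γ⦄ ⦃x y z : A⦄, x ∈ 𝒜 γ₁ → y ∈ 𝒜 γ₂ → z ∈ 𝒜 γ₃ →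
      br (α x) (μ y z)
        = ε γ₁ γ₂ • μ (α y) (br x z) + ε (γ₁ + γ₂) γ₃ • μ (α z) (br x y))
    (hD : GradedEnd 𝒜 D)
    (hDμ : ∀ x y : A, D (μ x y) = μ (D x) y + μ x (D y))
    (hDbr : ∀ x y : A, D (br x y) = br (D x) y + br x (D y))
    (hDα : ∀ x : A, α (D x) = D (α x)) :
    GradedMul 𝒜 (precompMul D μ) ∧
    IsHomNovikov 𝒜 ε (precompMul D μ) α ∧
    IsHomLie 𝒜 ε br α ∧
    GDCompat 𝒜 ε (precompMul D μ) br α := by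
  obtain ⟨h0, h1, h2, h3⟩ := hε
  have hp : ∀ u v, precompMul D μ u v = μ u (D v) := fun _ _ => rfl
  have hinv : ∀ a b, ε b a = (ε a b)⁻¹ := fun a b =>
    eq_inv_of_mul_eq_one_right (h1 a b)
  refine ⟨fun γ₁ γ₂ x y hx hy => hμ hx (hD hy), ⟨?_, ?_⟩, hLie, ?_⟩
  · intro γ₁ γ₂ γ₃ x y z hx hy hz
    simp only [hp, hDμ, ← hDα, map_add]
    rw [hassoc hx (hD hy) (hD hz), hassoc hy (hD hx) (hD hz),
      ← hassoc hx hy (hD (hD hz)), ← hassoc hy hx (hD (hD hz)), hcomm hx hy]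
    simp only [map_smul, LinearMap.smul_apply]
    module
  · intro γ₁ γ₂ γ₃ x y z hx hy hz
    simp only [hp, ← hDα]
    rw [hassoc hx (hD hy) (hD hz), hassoc hx (hD hz) (hD hy), hcomm (hD hy) (hD hz), map_smul]
  · intro γ₁ γ₂ γ₃ x y z hx hy hz
    simp only [hp, hDbr, ← hDα, map_add]
    rw [hLeibniz hx hy (hD hz), hLeibniz hz hy (hD hx),
      hcomm (hbr hy hx) (hα (hD hz)), hcomm (hbr hy hz) (hα (hD hx)),
      hLie.1 hy hx, hLie.1 hy hz, hLie.1 hz (hD hx)]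
    simp only [map_neg, map_smul, h2, h3]
    rw [hinv γ₁ γ₂, hinv γ₁ γ₃, hinv γ₂ γ₃]
    have a := h0 γ₁ γ₂
    have b := h0 γ₁ γ₃
    have c := h0 γ₂ γ₃
    match_scalars <;> field_simp <;> ring
end
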